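/- arXiv:2207.06129 — 2 statements merged into one kernel-verified Lean document; each statement's English description precedes it below -/
import Mathlib

section
/- Let 1 < p < ∞ and w ∈ A_p, and let M be the Hardy–Littlewood maximal operator. Then there exists a constant C > 0, independent of f, a, and r, such that for every a ∈ ℝⁿ, r > 0, and f ∈ L^{p,w}_loc: ‖Mf‖_{L^{p,w}(B(a,r))} ≤ C·w(B(a,r))^{1/p}·sup_{r<t<∞} w(B(a,t))^{-1/p} ‖f‖_{L^{p,w}(B(a,t))}. -/
open MeasureTheory Metric Set
open scoped ENNReal

noncomputable section

/-- The weighted measure of a set: `w(E) = ∫_E w(x) dx`, valued in `ℝ≥0∞`. -/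
def wSet {n : ℕ} (w : EuclideanSpace ℝ (Fin n) → ℝ)
    (E : Set (EuclideanSpace ℝ (Fin n))) : ℝ≥0∞ :=
  ∫⁻ x in E, ENNReal.ofReal (w x)

/-- The weighted Lebesgue norm `‖f‖_{L^{p,w}(Ω)} = (∫_Ω |f(x)|^p w(x) dx)^{1/p}`. -/
def wLp {n : ℕ} (p : ℝ) (w f : EuclideanSpace ℝ (Fin n) → ℝ)
    (Ω : Set (EuclideanSpace ℝ (Fin n))) : ℝ≥0∞ :=
  (∫⁻ x in Ω, ENNReal.ofReal |f x| ^ p * ENNReal.ofReal (w x)) ^ (1 / p)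

/-- The weighted Lebesgue norm for an `ℝ≥0∞`-valued function. -/
def wLpE {n : ℕ} (p : ℝ) (w : EuclideanSpace ℝ (Fin n) → ℝ)
    (g : EuclideanSpace ℝ (Fin n) → ℝ≥0∞) (Ω : Set (EuclideanSpace ℝ (Fin n))) : ℝ≥0∞ :=
  (∫⁻ x in Ω, g x ^ p * ENNReal.ofReal (w x)) ^ (1 / p)

/-- The weak weighted Lebesgue norm `‖f‖_{WL^{p,w}(Ω)} = sup_{γ>0} γ·w({x ∈ Ω : |f(x)| > γ})^{1/p}`. -/
def wWeakLp {n : ℕ} (p : ℝ) (w f : EuclideanSpace ℝ (Fin n) → ℝ)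
    (Ω : Set (EuclideanSpace ℝ (Fin n))) : ℝ≥0∞ :=
  ⨆ γ : Set.Ioi (0 : ℝ),
    ENNReal.ofReal γ.1 * (wSet w {x | x ∈ Ω ∧ γ.1 < |f x|}) ^ (1 / p)

/-- The weak weighted Lebesgue norm for an `ℝ≥0∞`-valued function. -/
def wWeakLpE {n : ℕ} (p : ℝ) (w : EuclideanSpace ℝ (Fin n) → ℝ)
    (g : EuclideanSpace ℝ (Fin n) → ℝ≥0∞) (Ω : Set (EuclideanSpace ℝ (Fin n))) : ℝ≥0∞ :=
  ⨆ γ : Set.Ioi (0 : ℝ),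
    ENNReal.ofReal γ.1 * (wSet w {x | x ∈ Ω ∧ ENNReal.ofReal γ.1 < g x}) ^ (1 / p)

/-- `f ∈ L^{p,w}_loc`: `f` is measurable and `‖f‖_{L^{p,w}(B)} < ∞` on every ball. -/
def MemLocWLp {n : ℕ} (p : ℝ) (w f : EuclideanSpace ℝ (Fin n) → ℝ) : Prop :=
  Measurable f ∧ ∀ (a : EuclideanSpace ℝ (Fin n)) (r : ℝ), 0 < r → wLp p w f (ball a r) < ⊤

/-- A weight: nonnegative, measurable, locally integrable, positive a.e. -/
def IsWeight {n : ℕ} (w : EuclideanSpace ℝ (Fin n) → ℝ) : Prop :=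
  Measurable w ∧ (∀ x, 0 ≤ w x) ∧ LocallyIntegrable w volume ∧ ∀ᵐ x ∂volume, 0 < w x

/-- The Muckenhoupt class `A_p` for `1 < p`. -/
def MuckAp {n : ℕ} (p : ℝ) (w : EuclideanSpace ℝ (Fin n) → ℝ) : Prop :=
  ∃ C : ℝ, 0 < C ∧ ∀ (a : EuclideanSpace ℝ (Fin n)) (r : ℝ), 0 < r →
    ((volume (ball a r))⁻¹ * ∫⁻ x in ball a r, ENNReal.ofReal (w x)) *
      ((volume (ball a r))⁻¹ *
        ∫⁻ x in ball a r, ENNReal.ofReal (w x ^ (-(1 / (p - 1))))) ^ (p - 1) ≤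
      ENNReal.ofReal C

/-- The Muckenhoupt class `A_1`. -/
def MuckA1 {n : ℕ} (w : EuclideanSpace ℝ (Fin n) → ℝ) : Prop :=
  ∃ C : ℝ, 0 < C ∧ ∀ (a : EuclideanSpace ℝ (Fin n)) (r : ℝ), 0 < r →
    ((volume (ball a r))⁻¹ * ∫⁻ x in ball a r, ENNReal.ofReal (w x)) *
      essSup (fun x => ENNReal.ofReal (w x)⁻¹) (volume.restrict (ball a r)) ≤
      ENNReal.ofReal C

/-- The class `A_{p,q}` for `1 < p`, where `p'` is the conjugate exponent of `p`. -/
def MuckApq {n : ℕ} (p q p' : ℝ) (w : EuclideanSpace ℝ (Fin n) → ℝ) : Prop :=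
  ∃ C : ℝ, 0 < C ∧ ∀ (a : EuclideanSpace ℝ (Fin n)) (r : ℝ), 0 < r →
    ((volume (ball a r))⁻¹ * ∫⁻ x in ball a r, ENNReal.ofReal (w x ^ q)) ^ (1 / q) *
      ((volume (ball a r))⁻¹ * ∫⁻ x in ball a r, ENNReal.ofReal (w x ^ (-p'))) ^ (1 / p') ≤
      ENNReal.ofReal C

/-- The class `A_{1,q}`. -/
def MuckA1q {n : ℕ} (q : ℝ) (w : EuclideanSpace ℝ (Fin n) → ℝ) : Prop :=
  ∃ C : ℝ, 0 < C ∧ ∀ (a : EuclideanSpace ℝ (Fin n)) (r : ℝ), 0 < r →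
    ((volume (ball a r))⁻¹ * ∫⁻ x in ball a r, ENNReal.ofReal (w x ^ q)) ^ (1 / q) *
      essSup (fun x => ENNReal.ofReal (w x)⁻¹) (volume.restrict (ball a r)) ≤
      ENNReal.ofReal C

/-- The Hardy–Littlewood maximal operator. -/
def HLMax {n : ℕ} (f : EuclideanSpace ℝ (Fin n) → ℝ)
    (x : EuclideanSpace ℝ (Fin n)) : ℝ≥0∞ :=
  ⨆ r : Set.Ioi (0 : ℝ), (volume (ball x r.1))⁻¹ * ∫⁻ y in ball x r.1, ENNReal.ofReal |f y|

/-- The fractional integral operator `I_α` (applied to `|f|`, valued in `ℝ≥0∞`). -/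
def fracIntE {n : ℕ} (α : ℝ) (f : EuclideanSpace ℝ (Fin n) → ℝ)
    (x : EuclideanSpace ℝ (Fin n)) : ℝ≥0∞ :=
  ∫⁻ y, ENNReal.ofReal |f y| / ENNReal.ofReal (dist x y ^ ((n : ℝ) - α))

/-- The fractional maximal operator `M_α`. -/
def fracMax {n : ℕ} (α : ℝ) (f : EuclideanSpace ℝ (Fin n) → ℝ)
    (x : EuclideanSpace ℝ (Fin n)) : ℝ≥0∞ :=
  ⨆ r : Set.Ioi (0 : ℝ),
    (volume (ball x r.1)) ^ (α / (n : ℝ) - 1) * ∫⁻ y in ball x r.1, ENNReal.ofReal |f y|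

/-- The generalized weighted Morrey norm `‖f‖_{M^{p,w}_ψ}`. -/
def morreyNorm {n : ℕ} (p : ℝ) (w : EuclideanSpace ℝ (Fin n) → ℝ)
    (ψ : EuclideanSpace ℝ (Fin n) → ℝ → ℝ) (f : EuclideanSpace ℝ (Fin n) → ℝ) : ℝ≥0∞ :=
  ⨆ (a : EuclideanSpace ℝ (Fin n)) (r : Set.Ioi (0 : ℝ)),
    (ENNReal.ofReal (ψ a r.1))⁻¹ * wSet w (ball a r.1) ^ (-(1 / p)) * wLp p w f (ball a r.1)

/-- The generalized weighted Morrey norm for an `ℝ≥0∞`-valued function. -/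
def morreyNormE {n : ℕ} (p : ℝ) (w : EuclideanSpace ℝ (Fin n) → ℝ)
    (ψ : EuclideanSpace ℝ (Fin n) → ℝ → ℝ) (g : EuclideanSpace ℝ (Fin n) → ℝ≥0∞) : ℝ≥0∞ :=
  ⨆ (a : EuclideanSpace ℝ (Fin n)) (r : Set.Ioi (0 : ℝ)),
    (ENNReal.ofReal (ψ a r.1))⁻¹ * wSet w (ball a r.1) ^ (-(1 / p)) * wLpE p w g (ball a r.1)

/-- The generalized weighted weak Morrey norm `‖f‖_{WM^{p,w}_ψ}`. -/
def morreyWeakNorm {n : ℕ} (p : ℝ) (w : EuclideanSpace ℝ (Fin n) → ℝ)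
    (ψ : EuclideanSpace ℝ (Fin n) → ℝ → ℝ) (f : EuclideanSpace ℝ (Fin n) → ℝ) : ℝ≥0∞ :=
  ⨆ (a : EuclideanSpace ℝ (Fin n)) (r : Set.Ioi (0 : ℝ)),
    (ENNReal.ofReal (ψ a r.1))⁻¹ * wSet w (ball a r.1) ^ (-(1 / p)) * wWeakLp p w f (ball a r.1)

/-- The generalized weighted weak Morrey norm for an `ℝ≥0∞`-valued function. -/
def morreyWeakNormE {n : ℕ} (p : ℝ) (w : EuclideanSpace ℝ (Fin n) → ℝ)
    (ψ : EuclideanSpace ℝ (Fin n) → ℝ → ℝ) (g : EuclideanSpace ℝ (Fin n) → ℝ≥0∞) : ℝ≥0∞ :=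
  ⨆ (a : EuclideanSpace ℝ (Fin n)) (r : Set.Ioi (0 : ℝ)),
    (ENNReal.ofReal (ψ a r.1))⁻¹ * wSet w (ball a r.1) ^ (-(1 / p)) * wWeakLpE p w g (ball a r.1)

end

/-- Uncentered maximal operator with respect to a measure. -/
noncomputable def UM {E : Type*} [PseudoMetricSpace E] [MeasurableSpace E] (μ : Measure E)
    (g : E → ℝ≥0∞) (x : E) : ℝ≥0∞ :=
  ⨆ (c : E) (s : ℝ) (_ : x ∈ ball c s), (μ (ball c s))⁻¹ * ∫⁻ y in ball c s, g y ∂μ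

lemma le_UM {E : Type*} [PseudoMetricSpace E] [MeasurableSpace E] (μ : Measure E)
    (g : E → ℝ≥0∞) {x c : E} {s : ℝ} (h : x ∈ ball c s) :
    (μ (ball c s))⁻¹ * ∫⁻ y in ball c s, g y ∂μ ≤ UM μ g x :=
  le_iSup_of_le c (le_iSup_of_le s (le_iSup_of_le h le_rfl))

lemma lt_UM_iff {E : Type*} [PseudoMetricSpace E] [MeasurableSpace E] (μ : Measure E)
    (g : E → ℝ≥0∞) (x : E) (l : ℝ≥0∞) :
    l < UM μ g x ↔ ∃ c s, x ∈ ball c s ∧ l < (μ (ball c s))⁻¹ * ∫⁻ y in ball c s, g y ∂μ := by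
  simp only [UM, lt_iSup_iff, exists_prop]

lemma measurable_UM {E : Type*} [PseudoMetricSpace E] [MeasurableSpace E] [BorelSpace E]
    (μ : Measure E) (g : E → ℝ≥0∞) : Measurable (UM μ g) := by
  apply measurable_of_Ioi
  intro l
  apply IsOpen.measurableSet
  rw [Metric.isOpen_iff]
  intro x hx
  obtain ⟨c, s, hxc, hl⟩ := (lt_UM_iff μ g x l).1 hx
  obtain ⟨e, he, hsub⟩ := Metric.isOpen_iff.1 (isOpen_ball (x := c) (ε := s)) x hxc
  exact ⟨e, he, fun y hy => (lt_UM_iff μ g y l).2 ⟨c, s, hsub hy, hl⟩⟩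

lemma weak_UM {E : Type*} [PseudoMetricSpace E] [TopologicalSpace.SeparableSpace E]
    [MeasurableSpace E] [BorelSpace E]
    (μ : Measure E) (D : ℝ≥0∞)
    (hD : ∀ (c : E) (s : ℝ), 0 < s → μ (ball c (5 * s)) ≤ D * μ (ball c s))
    (g : E → ℝ≥0∞) (l : ℝ≥0∞) :
    l * μ {x | l < UM μ g x} ≤ D * ∫⁻ x, g x ∂μ := by
  let t : ℕ → Set (E × ℝ) := fun N => {b | 0 < b.2 ∧ b.2 ≤ N ∧
    l < (μ (ball b.1 b.2))⁻¹ * ∫⁻ y in ball b.1 b.2, g y ∂μ}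
  let U : ℕ → Set E := fun N => ⋃ b ∈ t N, ball b.1 b.2
  have hU : {x | l < UM μ g x} = ⋃ N, U N := by
    ext x
    simp only [mem_ofPred_eq, lt_UM_iff, mem_iUnion, U, t]
    constructor
    · rintro ⟨c, s, hx, hl⟩
      obtain ⟨N, hN⟩ := exists_nat_ge s
      exact ⟨N, (c, s), ⟨pos_of_mem_ball hx, hN, hl⟩, hx⟩
    · rintro ⟨N, b, ⟨_, _, hl⟩, hx⟩
      exact ⟨b.1, b.2, hx, hl⟩
  have hmono : Monotone U := by
    intro N M hNM
    apply biUnion_subset_biUnion_left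
    rintro b ⟨h1, h2, h3⟩
    exact ⟨h1, h2.trans (by exact_mod_cast hNM), h3⟩
  rw [hU, hmono.measure_iUnion, ENNReal.mul_iSup]
  apply iSup_le
  intro N
  obtain ⟨u, hut, hdis, hcov⟩ := Vitali.exists_disjoint_subfamily_covering_enlargement_ball
    (t N) (fun b => b.1) (fun b => b.2) N (fun b hb => hb.2.1) 5 (by norm_num)
  have hcount : u.Countable := hdis.countable_of_isOpen (fun _ _ => isOpen_ball)
    (fun b hb => nonempty_ball.2 (hut hb).1)
  have hsub : U N ⊆ ⋃ b ∈ u, ball b.1 (5 * b.2) := by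
    intro x hx
    simp only [U, mem_iUnion] at hx
    obtain ⟨b, hb, hxb⟩ := hx
    obtain ⟨b', hb', hs⟩ := hcov b hb
    exact mem_biUnion hb' (hs hxb)
  have hball : ∀ b ∈ t N, l * μ (ball b.1 b.2) ≤ ∫⁻ y in ball b.1 b.2, g y ∂μ := by
    rintro b ⟨_, _, h3⟩
    by_cases h0 : μ (ball b.1 b.2) = 0
    · simp [h0]
    by_cases ht : μ (ball b.1 b.2) = ⊤
    · simp [ht] at h3
    calc l * μ (ball b.1 b.2) ≤ ((μ (ball b.1 b.2))⁻¹ * ∫⁻ y in ball b.1 b.2, g y ∂μ)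
          * μ (ball b.1 b.2) := by gcongr
      _ = _ := by rw [mul_right_comm, ENNReal.inv_mul_cancel h0 ht, one_mul]
  calc l * μ (U N) ≤ l * ∑' b : u, μ (ball b.1.1 (5 * b.1.2)) := by
        gcongr
        exact (measure_mono hsub).trans (measure_biUnion_le μ hcount _)
    _ ≤ l * ∑' b : u, D * μ (ball b.1.1 b.1.2) := by
        gcongr with b
        exact hD _ _ (hut b.2).1
    _ = D * ∑' b : u, l * μ (ball b.1.1 b.1.2) := by
        rw [ENNReal.tsum_mul_left, ENNReal.tsum_mul_left]; ring
    _ ≤ D * ∑' b : u, ∫⁻ y in ball b.1.1 b.1.2, g y ∂μ := by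
        gcongr with b
        exact hball _ (hut b.2)
    _ = D * ∫⁻ y in ⋃ b ∈ u, ball b.1 b.2, g y ∂μ := by
        rw [lintegral_biUnion hcount (fun _ _ => measurableSet_ball) hdis]
    _ ≤ _ := by gcongr; exact Measure.restrict_le_self

lemma layer_real (s : ℝ) (hs : 0 < s) (b : ℝ) (hb : 0 ≤ b) :
    ENNReal.ofReal s * ∫⁻ l in Ioi (0:ℝ), (if ENNReal.ofReal l < ENNReal.ofReal b then
      ENNReal.ofReal (l ^ (s - 1)) else 0) = ENNReal.ofReal b ^ s := by
  have h1 : ∫⁻ l in Ioi (0:ℝ), (if ENNReal.ofReal l < ENNReal.ofReal b then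
      ENNReal.ofReal (l ^ (s - 1)) else 0) = ∫⁻ l in Ioo 0 b, ENNReal.ofReal (l ^ (s - 1)) := by
    have : Ioo 0 b = Iio b ∩ Ioi 0 := by ext; simp [and_comm]
    rw [this, ← Measure.restrict_restrict measurableSet_Iio, ← lintegral_indicator measurableSet_Iio]
    apply setLIntegral_congr_fun measurableSet_Ioi
    intro l hl
    have hl' : 0 < l := hl
    by_cases h : l < b
    · have hb' : 0 < b := hl'.trans h
      simp [h, indicator, hb']
    · have : ¬ ENNReal.ofReal l < ENNReal.ofReal b :=
        not_lt.2 (ENNReal.ofReal_le_ofReal (not_lt.1 h))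
      simp [this, h, indicator]
  have h2 := integral_rpow (a := 0) (b := b) (r := s - 1) (Or.inl (by linarith))
  have hIntg := intervalIntegral.intervalIntegrable_rpow' (a := 0) (b := b) (r := s - 1)
    (by linarith)
  rw [intervalIntegral.integral_of_le hb, integral_Ioc_eq_integral_Ioo] at h2
  rw [intervalIntegrable_iff_integrableOn_Ioo_of_le hb] at hIntg
  rw [h1, ← ofReal_integral_eq_lintegral_ofReal hIntg, h2, ← ENNReal.ofReal_mul hs.le,
    ENNReal.ofReal_rpow_of_nonneg hb hs.le]
  · congr 1
    rw [sub_add_cancel, Real.zero_rpow hs.ne']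
    field_simp
    simp
  · filter_upwards [ae_restrict_mem measurableSet_Ioo] with l hl
    exact Real.rpow_nonneg hl.1.le _

lemma layer (s : ℝ) (hs : 0 < s) (y : ℝ≥0∞) :
    ENNReal.ofReal s * ∫⁻ l in Ioi (0:ℝ), (if ENNReal.ofReal l < y then
      ENNReal.ofReal (l ^ (s - 1)) else 0) = y ^ s := by
  by_cases hy : y = ⊤
  · subst hy
    rw [ENNReal.top_rpow_of_pos hs, eq_top_iff]
    have : ∀ b : ℝ, 0 ≤ b → ENNReal.ofReal b ^ s ≤
        ENNReal.ofReal s * ∫⁻ l in Ioi (0:ℝ), (if ENNReal.ofReal l < ⊤ then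
      ENNReal.ofReal (l ^ (s - 1)) else 0) := by
      intro b hb
      rw [← layer_real s hs b hb]
      gcongr with l
      split_ifs with h1 h2
      · exact le_rfl
      · exact absurd ENNReal.ofReal_lt_top h2
      · exact zero_le
      · exact le_rfl
    apply le_of_forall_lt
    intro c hc
    have h3 := this ((c.toReal + 1) ^ (1 / s)) (by positivity)
    refine lt_of_lt_of_le ?_ h3
    rw [ENNReal.ofReal_rpow_of_nonneg (by positivity) hs.le, ← Real.rpow_mul (by positivity),
      one_div_mul_cancel hs.ne', Real.rpow_one, ENNReal.lt_ofReal_iff_toReal_lt hc.ne]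
    linarith
  · have := layer_real s hs y.toReal ENNReal.toReal_nonneg
    rwa [ENNReal.ofReal_toReal hy] at this

lemma meas2' {E : Type*} (q : ℝ) (g : E → ℝ≥0∞) (x : E) : Measurable fun l : ℝ =>
    (if ENNReal.ofReal l < 2 * g x then ENNReal.ofReal (l ^ (q - 1 - 1)) else 0) := by
  apply Measurable.ite
  · exact measurableSet_lt (by fun_prop) measurable_const
  · fun_prop
  · fun_prop

lemma strong_UM {E : Type*} [PseudoMetricSpace E] [TopologicalSpace.SeparableSpace E]
    [MeasurableSpace E] [BorelSpace E]
    (μ : Measure E) [SFinite μ] (D : ℝ≥0∞)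
    (hD : ∀ (c : E) (s : ℝ), 0 < s → μ (ball c (5 * s)) ≤ D * μ (ball c s))
    (q : ℝ) (hq : 1 < q) (g : E → ℝ≥0∞) (hg : Measurable g) :
    ∫⁻ x, UM μ g x ^ q ∂μ ≤
      (ENNReal.ofReal q * (2 * D) * ((ENNReal.ofReal (q - 1))⁻¹ * 2 ^ (q - 1))) *
        ∫⁻ x, g x ^ q ∂μ := by
  have hq0 : 0 < q := by linarith
  have hq1 : 0 < q - 1 := by linarith
  have hmU := measurable_UM μ g
  have meas1 : Measurable (Function.uncurry fun (x : E) (l : ℝ) =>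
      if ENNReal.ofReal l < UM μ g x then ENNReal.ofReal (l ^ (q - 1)) else 0) := by
    apply Measurable.ite
    · exact measurableSet_lt (by fun_prop) (hmU.comp measurable_fst)
    · fun_prop
    · fun_prop
  have meas2 : Measurable (Function.uncurry fun (x : E) (l : ℝ) =>
      g x * if ENNReal.ofReal l < 2 * g x then ENNReal.ofReal (l ^ (q - 1 - 1)) else 0) := by
    apply Measurable.mul (hg.comp measurable_fst)
    apply Measurable.ite
    · exact measurableSet_lt (by fun_prop) ((hg.comp measurable_fst).const_mul 2)
    · fun_prop
    · fun_prop
  have key : ∀ l : ℝ, 0 < l →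
      ∫⁻ x, (if ENNReal.ofReal l < UM μ g x then ENNReal.ofReal (l ^ (q - 1)) else 0) ∂μ ≤
      (2 * D) * ∫⁻ x, g x * (if ENNReal.ofReal l < 2 * g x then
        ENNReal.ofReal (l ^ (q - 1 - 1)) else 0) ∂μ := by
    intro l hl
    set L := ENNReal.ofReal (l / 2) with hL
    have hL2 : ENNReal.ofReal l = 2 * L := by
      rw [hL, ← ENNReal.ofReal_ofNat, ← ENNReal.ofReal_mul (by norm_num)]; congr 1; ring
    let g1 : E → ℝ≥0∞ := fun x => if ENNReal.ofReal l < 2 * g x then g x else 0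
    have hsub : {x | ENNReal.ofReal l < UM μ g x} ⊆ {x | L < UM μ g1 x} := by
      intro x hx
      obtain ⟨c, s, hxc, h⟩ := (lt_UM_iff μ g x _).1 hx
      simp only [mem_ofPred_eq]
      by_contra hcon
      rw [not_lt] at hcon
      apply absurd h
      rw [not_lt]
      have hle : ∀ y, g y ≤ g1 y + L := by
        intro y
        simp only [g1]
        split_ifs with hy
        · exact le_self_add
        · rw [hL2, not_lt] at hy
          rw [zero_add]
          exact (ENNReal.mul_le_mul_iff_right (by simp) (by simp)).1 hy
      calc (μ (ball c s))⁻¹ * ∫⁻ y in ball c s, g y ∂μ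
          ≤ (μ (ball c s))⁻¹ * ∫⁻ y in ball c s, (g1 y + L) ∂μ := by
            gcongr with y; exact hle y
        _ = (μ (ball c s))⁻¹ * ∫⁻ y in ball c s, g1 y ∂μ
            + L * ((μ (ball c s))⁻¹ * μ (ball c s)) := by
            rw [lintegral_add_right _ measurable_const, setLIntegral_const]; ring
        _ ≤ L + L * 1 := by
            gcongr
            · exact (le_UM μ g1 hxc).trans hcon
            · exact ENNReal.inv_mul_le_one _
        _ = ENNReal.ofReal l := by rw [hL2]; ring
    have hweak := weak_UM μ D hD g1 L
    have hmeas : MeasurableSet {x | ENNReal.ofReal l < UM μ g x} :=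
      measurableSet_lt measurable_const hmU
    have e1 : ∫⁻ x, (if ENNReal.ofReal l < UM μ g x then ENNReal.ofReal (l ^ (q - 1)) else 0) ∂μ
        = ENNReal.ofReal (l ^ (q - 1)) * μ {x | ENNReal.ofReal l < UM μ g x} := by
      rw [← lintegral_indicator_const hmeas]
      congr 1; ext x; simp [indicator]
    have e2 : ∫⁻ x, g x * (if ENNReal.ofReal l < 2 * g x then
        ENNReal.ofReal (l ^ (q - 1 - 1)) else 0) ∂μ
        = ENNReal.ofReal (l ^ (q - 1 - 1)) * ∫⁻ x, g1 x ∂μ := by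
      rw [← lintegral_const_mul']
      · congr 1; ext x; simp only [g1]; split_ifs <;> ring
      · exact ENNReal.ofReal_ne_top
    rw [e1, e2]
    have e3 : ENNReal.ofReal (l ^ (q - 1)) = ENNReal.ofReal (l ^ (q - 1 - 1)) * (2 * L) := by
      rw [← hL2, ← ENNReal.ofReal_mul (by positivity), Real.rpow_sub_one hl.ne' (q-1)]
      congr 1; field_simp
    rw [e3]
    calc ENNReal.ofReal (l ^ (q - 1 - 1)) * (2 * L) * μ {x | ENNReal.ofReal l < UM μ g x}
        ≤ ENNReal.ofReal (l ^ (q - 1 - 1)) * (2 * L) * μ {x | L < UM μ g1 x} := by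
          gcongr
      _ = ENNReal.ofReal (l ^ (q - 1 - 1)) * 2 * (L * μ {x | L < UM μ g1 x}) := by ring
      _ ≤ ENNReal.ofReal (l ^ (q - 1 - 1)) * 2 * (D * ∫⁻ x, g1 x ∂μ) := by gcongr
      _ = _ := by ring
  calc ∫⁻ x, UM μ g x ^ q ∂μ
      = ∫⁻ x, (ENNReal.ofReal q * ∫⁻ l in Ioi (0:ℝ), (if ENNReal.ofReal l < UM μ g x then
          ENNReal.ofReal (l ^ (q - 1)) else 0)) ∂μ := by
        congr 1; ext x; rw [layer q hq0]
    _ = ENNReal.ofReal q * ∫⁻ l in Ioi (0:ℝ), ∫⁻ x, (if ENNReal.ofReal l < UM μ g x then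
          ENNReal.ofReal (l ^ (q - 1)) else 0) ∂μ := by
        rw [lintegral_const_mul' _ _ ENNReal.ofReal_ne_top,
          lintegral_lintegral_swap meas1.aemeasurable]
    _ ≤ ENNReal.ofReal q * ∫⁻ l in Ioi (0:ℝ), (2 * D) * ∫⁻ x, g x *
          (if ENNReal.ofReal l < 2 * g x then ENNReal.ofReal (l ^ (q - 1 - 1)) else 0) ∂μ := by
        gcongr ENNReal.ofReal q * ?_
        exact setLIntegral_mono' measurableSet_Ioi key
    _ = ENNReal.ofReal q * (2 * D) * ∫⁻ x, (∫⁻ l in Ioi (0:ℝ), g x *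
          (if ENNReal.ofReal l < 2 * g x then ENNReal.ofReal (l ^ (q - 1 - 1)) else 0)) ∂μ := by
        have hm : Measurable fun l : ℝ => ∫⁻ x, g x *
          (if ENNReal.ofReal l < 2 * g x then ENNReal.ofReal (l ^ (q - 1 - 1)) else 0) ∂μ :=
          meas2.lintegral_prod_left'
        rw [lintegral_const_mul _ hm, lintegral_lintegral_swap meas2.aemeasurable, ← mul_assoc]
    _ = ENNReal.ofReal q * (2 * D) * ∫⁻ x, ((ENNReal.ofReal (q - 1))⁻¹ * 2 ^ (q - 1)) * g x ^ q
          ∂μ := by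
        congr 2; ext x
        rw [lintegral_const_mul _ (meas2' q g x)]
        have h := layer (q - 1) hq1 (2 * g x)
        have h' : ∫⁻ l in Ioi (0:ℝ), (if ENNReal.ofReal l < 2 * g x then
            ENNReal.ofReal (l ^ (q - 1 - 1)) else 0) =
            (ENNReal.ofReal (q - 1))⁻¹ * (2 * g x) ^ (q - 1) := by
          rw [← h, ← mul_assoc, ENNReal.inv_mul_cancel (by simpa using hq) ENNReal.ofReal_ne_top,
            one_mul]
        rw [h', ENNReal.mul_rpow_of_nonneg _ _ hq1.le]
        have h4 : g x ^ q = g x * g x ^ (q - 1) := by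
          conv_rhs => enter [1]; rw [← ENNReal.rpow_one (g x)]
          rw [← ENNReal.rpow_add_of_nonneg _ _ zero_le_one hq1.le]; congr 1; ring
        rw [h4]; ring
    _ = _ := by
        rw [lintegral_const_mul _ (by fun_prop)]; ring

lemma holder_W {E : Type*} [MeasurableSpace E] (m : Measure E) (p : ℝ) (hp : 1 < p)
    (W S : E → ℝ≥0∞) (hW : Measurable W)
    (hWS : ∀ᵐ x ∂m, W x ≠ 0 ∧ W x ≠ ⊤ ∧ S x = W x ^ (-(1 / (p - 1))))
    (g : E → ℝ≥0∞) (hg : Measurable g) :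
    (∫⁻ x, g x ∂m) ^ p ≤ (∫⁻ x, g x ^ p * W x ∂m) * (∫⁻ x, S x ∂m) ^ (p - 1) := by
  have hp0 : 0 < p := by linarith
  have hp1 : 0 < p - 1 := by linarith
  have hc : p.HolderConjugate (p / (p - 1)) := Real.HolderConjugate.conjExponent hp
  have h := ENNReal.lintegral_mul_le_Lp_mul_Lq m hc (f := fun x => g x * W x ^ (1 / p))
    (g := fun x => W x ^ (-(1 / p))) (by fun_prop) (by fun_prop)
  have e1 : ∫⁻ x, ((fun x => g x * W x ^ (1 / p)) * (fun x => W x ^ (-(1 / p)))) x ∂m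
      = ∫⁻ x, g x ∂m := by
    apply lintegral_congr_ae
    filter_upwards [hWS] with x hx
    simp only [Pi.mul_apply]
    rw [mul_assoc, ← ENNReal.rpow_add _ _ hx.1 hx.2.1]
    simp
  have e2 : ∫⁻ x, (g x * W x ^ (1 / p)) ^ p ∂m = ∫⁻ x, g x ^ p * W x ∂m := by
    congr 1; ext x
    rw [ENNReal.mul_rpow_of_nonneg _ _ hp0.le, ← ENNReal.rpow_mul, one_div_mul_cancel hp0.ne',
      ENNReal.rpow_one]
  have e3 : ∫⁻ x, (W x ^ (-(1 / p))) ^ (p / (p - 1)) ∂m = ∫⁻ x, S x ∂m := by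
    apply lintegral_congr_ae
    filter_upwards [hWS] with x hx
    rw [hx.2.2, ← ENNReal.rpow_mul]
    congr 1; field_simp
  rw [e1, e2, e3] at h
  calc (∫⁻ x, g x ∂m) ^ p ≤ _ := ENNReal.rpow_le_rpow h hp0.le
    _ = _ := by
      rw [ENNReal.mul_rpow_of_nonneg _ _ hp0.le, ← ENNReal.rpow_mul, ← ENNReal.rpow_mul,
        one_div_mul_cancel hp0.ne', ENNReal.rpow_one]
      congr 2; field_simp

section doubling

variable {n : ℕ}

lemma vol5 (a : EuclideanSpace ℝ (Fin n)) (r : ℝ) :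
    volume (ball a (5 * r)) = ENNReal.ofReal (5 ^ n) * volume (ball a r) := by
  rw [Measure.addHaar_ball_mul_of_pos volume a (by norm_num : (0:ℝ) < 5) r,
    Measure.addHaar_ball_center volume a r, finrank_euclideanSpace_fin]

lemma doub_aux (p : ℝ) (hp : 1 < p) (W S : EuclideanSpace ℝ (Fin n) → ℝ≥0∞)
    (hW : Measurable W)
    (hWS : ∀ᵐ x, W x ≠ 0 ∧ W x ≠ ⊤ ∧ S x = W x ^ (-(1 / (p - 1)))) (C : ℝ≥0∞)
    (hA : ∀ (a : EuclideanSpace ℝ (Fin n)) (r : ℝ), 0 < r →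
      (∫⁻ x in ball a r, W x) * (∫⁻ x in ball a r, S x) ^ (p - 1) ≤ C * volume (ball a r) ^ p)
    (a : EuclideanSpace ℝ (Fin n)) (r : ℝ) (hr : 0 < r) :
    (∫⁻ x in ball a (5 * r), W x) * (∫⁻ x in ball a (5 * r), S x) ^ (p - 1) ≤
      (C * ENNReal.ofReal (5 ^ n) ^ p) *
        ((∫⁻ x in ball a r, W x) * (∫⁻ x in ball a r, S x) ^ (p - 1)) := by
  have h := holder_W (volume.restrict (ball a r)) p hp W S hW (ae_restrict_of_ae hWS)
    (fun _ => 1) measurable_const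
  simp only [lintegral_const, ENNReal.one_rpow, one_mul, Measure.restrict_apply MeasurableSet.univ,
    univ_inter] at h
  calc _ ≤ _ := hA a (5 * r) (by linarith)
    _ = C * ENNReal.ofReal (5 ^ n) ^ p * volume (ball a r) ^ p := by
      rw [vol5, ENNReal.mul_rpow_of_nonneg _ _ (by linarith)]; ring
    _ ≤ _ := by gcongr

lemma sub5 (a : EuclideanSpace ℝ (Fin n)) (r : ℝ) (hr : 0 < r) : ball a r ⊆ ball a (5 * r) :=
  ball_subset_ball (by linarith)

lemma doub_W (p : ℝ) (hp : 1 < p) (W S : EuclideanSpace ℝ (Fin n) → ℝ≥0∞)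
    (hW : Measurable W)
    (hWS : ∀ᵐ x, W x ≠ 0 ∧ W x ≠ ⊤ ∧ S x = W x ^ (-(1 / (p - 1)))) (C : ℝ≥0∞)
    (hA : ∀ (a : EuclideanSpace ℝ (Fin n)) (r : ℝ), 0 < r →
      (∫⁻ x in ball a r, W x) * (∫⁻ x in ball a r, S x) ^ (p - 1) ≤ C * volume (ball a r) ^ p)
    (hS0 : ∀ (a : EuclideanSpace ℝ (Fin n)) (r : ℝ), 0 < r →
      (∫⁻ x in ball a r, S x) ≠ 0 ∧ (∫⁻ x in ball a r, S x) ≠ ⊤)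
    (a : EuclideanSpace ℝ (Fin n)) (r : ℝ) (hr : 0 < r) :
    (∫⁻ x in ball a (5 * r), W x) ≤ (C * ENNReal.ofReal (5 ^ n) ^ p) * ∫⁻ x in ball a r, W x := by
  have h5 := hS0 a (5 * r) (by linarith)
  have h := doub_aux p hp W S hW hWS C hA a r hr
  have hp1 : 0 ≤ p - 1 := by linarith
  have hm : (∫⁻ x in ball a r, S x) ^ (p - 1) ≤ (∫⁻ x in ball a (5 * r), S x) ^ (p - 1) :=
    ENNReal.rpow_le_rpow (lintegral_mono_set (sub5 a r hr)) hp1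
  have h' := h.trans (b := _) (mul_le_mul_right (mul_le_mul_right hm _) _)
  rw [← mul_assoc] at h'
  refine (ENNReal.mul_le_mul_iff_left ?_ ?_).1 h'
  · exact (ENNReal.rpow_pos (pos_iff_ne_zero.2 h5.1) h5.2).ne'
  · exact ENNReal.rpow_ne_top_of_nonneg hp1 h5.2

lemma doub_S (p : ℝ) (hp : 1 < p) (W S : EuclideanSpace ℝ (Fin n) → ℝ≥0∞)
    (hW : Measurable W)
    (hWS : ∀ᵐ x, W x ≠ 0 ∧ W x ≠ ⊤ ∧ S x = W x ^ (-(1 / (p - 1)))) (C : ℝ≥0∞)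
    (hA : ∀ (a : EuclideanSpace ℝ (Fin n)) (r : ℝ), 0 < r →
      (∫⁻ x in ball a r, W x) * (∫⁻ x in ball a r, S x) ^ (p - 1) ≤ C * volume (ball a r) ^ p)
    (hW0 : ∀ (a : EuclideanSpace ℝ (Fin n)) (r : ℝ), 0 < r →
      (∫⁻ x in ball a r, W x) ≠ 0 ∧ (∫⁻ x in ball a r, W x) ≠ ⊤)
    (a : EuclideanSpace ℝ (Fin n)) (r : ℝ) (hr : 0 < r) :
    (∫⁻ x in ball a (5 * r), S x) ≤
      (C * ENNReal.ofReal (5 ^ n) ^ p) ^ (1 / (p - 1)) * ∫⁻ x in ball a r, S x := by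
  have h5 := hW0 a (5 * r) (by linarith)
  have h := doub_aux p hp W S hW hWS C hA a r hr
  have hp1 : 0 < p - 1 := by linarith
  have hm : (∫⁻ x in ball a r, W x) ≤ (∫⁻ x in ball a (5 * r), W x) :=
    lintegral_mono_set (sub5 a r hr)
  have h' := h.trans (b := _) (mul_le_mul_right (mul_le_mul_left hm _) _)
  rw [mul_left_comm] at h'
  have h2 := (ENNReal.mul_le_mul_iff_right h5.1 h5.2).1 h'
  rw [← ENNReal.rpow_le_rpow_iff hp1, ENNReal.mul_rpow_of_nonneg _ _ hp1.le, ← ENNReal.rpow_mul,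
    one_div_mul_cancel hp1.ne', ENNReal.rpow_one]
  exact h2

/-- Maximal function of a nonnegative extended function. -/
noncomputable def HLE (g : EuclideanSpace ℝ (Fin n) → ℝ≥0∞) (x : EuclideanSpace ℝ (Fin n)) :
    ℝ≥0∞ :=
  ⨆ r : Set.Ioi (0 : ℝ), (volume (ball x r.1))⁻¹ * ∫⁻ y in ball x r.1, g y

lemma pointwise_lerner (p : ℝ) (hp : 1 < p) (W S : EuclideanSpace ℝ (Fin n) → ℝ≥0∞)
    (hW : Measurable W) (hS : Measurable S)
    (hWS : ∀ᵐ x, W x ≠ 0 ∧ W x ≠ ⊤ ∧ S x = W x ^ (-(1 / (p - 1)))) (C : ℝ≥0∞)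
    (hA : ∀ (a : EuclideanSpace ℝ (Fin n)) (r : ℝ), 0 < r →
      (∫⁻ x in ball a r, W x) * (∫⁻ x in ball a r, S x) ^ (p - 1) ≤ C * volume (ball a r) ^ p)
    (hW0 : ∀ (a : EuclideanSpace ℝ (Fin n)) (r : ℝ), 0 < r →
      (∫⁻ x in ball a r, W x) ≠ 0 ∧ (∫⁻ x in ball a r, W x) ≠ ⊤)
    (hS0 : ∀ (a : EuclideanSpace ℝ (Fin n)) (r : ℝ), 0 < r →
      (∫⁻ x in ball a r, S x) ≠ 0 ∧ (∫⁻ x in ball a r, S x) ≠ ⊤)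
    (g : EuclideanSpace ℝ (Fin n) → ℝ≥0∞) (hg : Measurable g) (x : EuclideanSpace ℝ (Fin n)) :
    HLE g x ^ (p - 1) ≤ C * UM (volume.withDensity W)
      (fun y => UM (volume.withDensity S) (fun z => g z * (S z)⁻¹) y ^ (p - 1) * (W y)⁻¹) x := by
  have hp1 : 0 < p - 1 := by linarith
  set ν := (volume : Measure (EuclideanSpace ℝ (Fin n))).withDensity S with hν
  set μ := (volume : Measure (EuclideanSpace ℝ (Fin n))).withDensity W with hμ
  set G := UM ν (fun z => g z * (S z)⁻¹) with hG
  have hGm : Measurable G := measurable_UM _ _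
  suffices H : ∀ s : ℝ, 0 < s → ((volume (ball x s))⁻¹ * ∫⁻ y in ball x s, g y) ^ (p - 1) ≤
      C * UM μ (fun y => G y ^ (p - 1) * (W y)⁻¹) x by
    rw [← ENNReal.le_rpow_inv_iff hp1]
    apply iSup_le
    rintro ⟨s, hs⟩
    rw [ENNReal.le_rpow_inv_iff hp1]
    exact H s hs
  intro s hs
  set V := volume (ball x s) with hV
  have hV0 : V ≠ 0 := (measure_ball_pos volume x hs).ne'
  have hVt : V ≠ ⊤ := measure_ball_lt_top.ne
  obtain ⟨hw0, hwt⟩ := hW0 x s hs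
  obtain ⟨hs0, hst⟩ := hS0 x s hs
  have hA' := hA x s hs
  have hμB : μ (ball x s) = ∫⁻ x in ball x s, W x := withDensity_apply _ measurableSet_ball
  have hνB : ν (ball x s) = ∫⁻ x in ball x s, S x := withDensity_apply _ measurableSet_ball
  set w := ∫⁻ x in ball x s, W x
  set σ := ∫⁻ x in ball x s, S x
  set I := ∫⁻ y in ball x s, g y with hI
  have hmem : x ∈ ball x s := mem_ball_self hs
  have eI : ∫⁻ y in ball x s, g y * (S y)⁻¹ ∂ν = I := by
    rw [hν, setLIntegral_withDensity_eq_setLIntegral_mul _ hS (by fun_prop) measurableSet_ball]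
    apply lintegral_congr_ae
    filter_upwards [ae_restrict_of_ae hWS] with y hy
    have h0 : S y ≠ 0 := by
      rw [hy.2.2]; exact (ENNReal.rpow_pos (pos_iff_ne_zero.2 hy.1) hy.2.1).ne'
    have ht : S y ≠ ⊤ := by
      rw [hy.2.2]; exact ENNReal.rpow_ne_top_of_ne_zero hy.1 hy.2.1
    simp only [Pi.mul_apply]
    rw [mul_comm, mul_assoc, ENNReal.inv_mul_cancel h0 ht, mul_one]
  have e1 : ∀ y ∈ ball x s, σ⁻¹ * I ≤ G y := by
    intro y hy
    have := le_UM ν (fun z => g z * (S z)⁻¹) hy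
    rwa [eI, hνB] at this
  have e2 : (σ⁻¹ * I) ^ (p - 1) * V ≤ ∫⁻ y in ball x s, G y ^ (p - 1) * (W y)⁻¹ ∂μ := by
    rw [hμ, setLIntegral_withDensity_eq_setLIntegral_mul _ hW (by fun_prop) measurableSet_ball]
    rw [← setLIntegral_const]
    apply lintegral_mono_ae
    filter_upwards [ae_restrict_of_ae hWS, ae_restrict_mem measurableSet_ball] with y hy hyb
    simp only [Pi.mul_apply]
    rw [mul_comm (W y), mul_assoc, ENNReal.inv_mul_cancel hy.1 hy.2.1, mul_one]
    exact ENNReal.rpow_le_rpow (e1 y hyb) hp1.le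
  have e3 : w⁻¹ * ((σ⁻¹ * I) ^ (p - 1) * V) ≤ UM μ (fun y => G y ^ (p - 1) * (W y)⁻¹) x := by
    have := le_UM μ (fun y => G y ^ (p - 1) * (W y)⁻¹) hmem
    rw [hμB] at this
    exact le_trans (by gcongr) this
  have e4 : (V ^ p)⁻¹ * (w * σ ^ (p - 1)) ≤ C := by
    calc (V ^ p)⁻¹ * (w * σ ^ (p - 1)) ≤ (V ^ p)⁻¹ * (C * V ^ p) := by gcongr
      _ = C * ((V ^ p)⁻¹ * V ^ p) := by ring
      _ ≤ C * 1 := by gcongr; exact ENNReal.inv_mul_le_one _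
      _ = C := mul_one _
  have e5 : (V⁻¹ * I) ^ (p - 1) =
      ((V ^ p)⁻¹ * (w * σ ^ (p - 1))) * (w⁻¹ * ((σ⁻¹ * I) ^ (p - 1) * V)) := by
    have a1 : V ^ p = V ^ (p - 1) * V := by
      conv_rhs => rw [← ENNReal.rpow_one V, ← ENNReal.rpow_mul, one_mul]
      rw [← ENNReal.rpow_add _ _ hV0 hVt]; congr 1; ring
    have hVp0 : V ^ (p - 1) ≠ 0 := (ENNReal.rpow_pos (pos_iff_ne_zero.2 hV0) hVt).ne'
    have hVpt : V ^ (p - 1) ≠ ⊤ := ENNReal.rpow_ne_top_of_nonneg hp1.le hVt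
    have hσ0 : σ ^ (p - 1) ≠ 0 := (ENNReal.rpow_pos (pos_iff_ne_zero.2 hs0) hst).ne'
    have hσt : σ ^ (p - 1) ≠ ⊤ := ENNReal.rpow_ne_top_of_nonneg hp1.le hst
    rw [a1, ENNReal.mul_inv (Or.inl hVp0) (Or.inl hVpt), ENNReal.mul_rpow_of_nonneg _ _ hp1.le,
      ENNReal.mul_rpow_of_nonneg _ _ hp1.le, ENNReal.inv_rpow, ENNReal.inv_rpow]
    calc _ = (V ^ (p - 1))⁻¹ * I ^ (p - 1) * 1 * 1 * 1 := by ring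
      _ = (V ^ (p - 1))⁻¹ * I ^ (p - 1) * (V⁻¹ * V) * (w⁻¹ * w) *
          ((σ ^ (p - 1))⁻¹ * σ ^ (p - 1)) := by
        rw [ENNReal.inv_mul_cancel hV0 hVt, ENNReal.inv_mul_cancel hw0 hwt,
          ENNReal.inv_mul_cancel hσ0 hσt]
      _ = _ := by ring
  rw [e5]
  gcongr

lemma muckenhoupt (p : ℝ) (hp : 1 < p) (W S : EuclideanSpace ℝ (Fin n) → ℝ≥0∞)
    (hW : Measurable W) (hS : Measurable S)
    (hWS : ∀ᵐ x, W x ≠ 0 ∧ W x ≠ ⊤ ∧ S x = W x ^ (-(1 / (p - 1)))) (C : ℝ≥0∞) (hC : C ≠ ⊤)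
    (hA : ∀ (a : EuclideanSpace ℝ (Fin n)) (r : ℝ), 0 < r →
      (∫⁻ x in ball a r, W x) * (∫⁻ x in ball a r, S x) ^ (p - 1) ≤ C * volume (ball a r) ^ p)
    (hW0 : ∀ (a : EuclideanSpace ℝ (Fin n)) (r : ℝ), 0 < r →
      (∫⁻ x in ball a r, W x) ≠ 0 ∧ (∫⁻ x in ball a r, W x) ≠ ⊤)
    (hS0 : ∀ (a : EuclideanSpace ℝ (Fin n)) (r : ℝ), 0 < r →
      (∫⁻ x in ball a r, S x) ≠ 0 ∧ (∫⁻ x in ball a r, S x) ≠ ⊤) :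
    ∃ K : ℝ≥0∞, K ≠ ⊤ ∧ ∀ g : EuclideanSpace ℝ (Fin n) → ℝ≥0∞, Measurable g →
      ∫⁻ x, HLE g x ^ p * W x ≤ K * ∫⁻ x, g x ^ p * W x := by
  have hp0 : 0 < p := by linarith
  have hp1 : 0 < p - 1 := by linarith
  have hq : 1 < p / (p - 1) := by rw [lt_div_iff₀ hp1]; linarith
  have hq1 : 0 < p / (p - 1) - 1 := by linarith
  set q := p / (p - 1) with hqdef
  have hDt : C * ENNReal.ofReal (5 ^ n) ^ p ≠ ⊤ :=
    ENNReal.mul_ne_top hC (ENNReal.rpow_ne_top_of_nonneg hp0.le ENNReal.ofReal_ne_top)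
  have hdW := doub_W p hp W S hW hWS C hA hS0
  have hdS := doub_S p hp W S hW hWS C hA hW0
  set D1 := C * ENNReal.ofReal (5 ^ n) ^ p
  set D2 := D1 ^ (1 / (p - 1))
  have hD2 : D2 ≠ ⊤ := ENNReal.rpow_ne_top_of_nonneg (by positivity) hDt
  have s1 := strong_UM (volume.withDensity W) D1 (fun c s hs => by
    rw [withDensity_apply _ measurableSet_ball, withDensity_apply _ measurableSet_ball]
    exact hdW c s hs) q hq
  have s2 := strong_UM (volume.withDensity S) D2 (fun c s hs => by
    rw [withDensity_apply _ measurableSet_ball, withDensity_apply _ measurableSet_ball]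
    exact hdS c s hs) p hp
  have hKt : ∀ (D : ℝ≥0∞) (q : ℝ), D ≠ ⊤ → 1 < q →
      ENNReal.ofReal q * (2 * D) * ((ENNReal.ofReal (q - 1))⁻¹ * 2 ^ (q - 1)) ≠ ⊤ := by
    intro D q hD hq
    refine ENNReal.mul_ne_top (ENNReal.mul_ne_top ENNReal.ofReal_ne_top
      (ENNReal.mul_ne_top (by simp) hD)) (ENNReal.mul_ne_top ?_ ?_)
    · simpa using hq
    · exact ENNReal.rpow_ne_top_of_nonneg (by linarith) (by simp)
  have hK1 := hKt D1 q hDt hq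
  have hK2 := hKt D2 p hD2 hp
  set K1 := ENNReal.ofReal q * (2 * D1) * ((ENNReal.ofReal (q - 1))⁻¹ * 2 ^ (q - 1))
  set K2 := ENNReal.ofReal p * (2 * D2) * ((ENNReal.ofReal (p - 1))⁻¹ * 2 ^ (p - 1))
  refine ⟨C ^ q * K1 * K2, ENNReal.mul_ne_top (ENNReal.mul_ne_top
    (ENNReal.rpow_ne_top_of_nonneg (by linarith) hC) hK1) hK2, ?_⟩
  intro g hg
  have hpt := pointwise_lerner p hp W S hW hS hWS C hA hW0 hS0 g hg
  have s2' := s2 (fun z => g z * (S z)⁻¹) (by fun_prop)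
  have hGm : Measurable (UM (volume.withDensity S) (fun z => g z * (S z)⁻¹)) := measurable_UM _ _
  set G := UM (volume.withDensity S) (fun z => g z * (S z)⁻¹) with hG
  have s1' := s1 (fun y => G y ^ (p - 1) * (W y)⁻¹) (by fun_prop)
  have hHm : Measurable (UM (volume.withDensity W) (fun y => G y ^ (p - 1) * (W y)⁻¹)) :=
    measurable_UM _ _
  set H := UM (volume.withDensity W) (fun y => G y ^ (p - 1) * (W y)⁻¹) with hH
  rw [lintegral_withDensity_eq_lintegral_mul _ hW (by fun_prop),
    lintegral_withDensity_eq_lintegral_mul _ hW (by fun_prop)] at s1'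
  rw [lintegral_withDensity_eq_lintegral_mul _ hS (by fun_prop),
    lintegral_withDensity_eq_lintegral_mul _ hS (by fun_prop)] at s2'
  simp only [Pi.mul_apply] at s1' s2'
  have hpq : (p - 1) * q = p := by rw [hqdef]; field_simp
  calc ∫⁻ x, HLE g x ^ p * W x ≤ ∫⁻ x, C ^ q * (W x * H x ^ q) := by
        apply lintegral_mono
        intro x
        have : HLE g x ^ p ≤ C ^ q * H x ^ q := by
          rw [← ENNReal.mul_rpow_of_nonneg _ _ (by linarith), ← hpq, ENNReal.rpow_mul]
          exact ENNReal.rpow_le_rpow (hpt x) (by linarith)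
        calc HLE g x ^ p * W x ≤ C ^ q * H x ^ q * W x := by gcongr
          _ = _ := by ring
    _ = C ^ q * ∫⁻ x, W x * H x ^ q := lintegral_const_mul _ (by fun_prop)
    _ ≤ C ^ q * (K1 * ∫⁻ x, W x * (G x ^ (p - 1) * (W x)⁻¹) ^ q) := by gcongr
    _ = C ^ q * (K1 * ∫⁻ x, S x * G x ^ p) := by
        congr 2
        apply lintegral_congr_ae
        filter_upwards [hWS] with x hx
        rw [ENNReal.mul_rpow_of_nonneg _ _ (by linarith), ← ENNReal.rpow_mul, hpq, hx.2.2,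
          ENNReal.inv_rpow, ← ENNReal.rpow_neg, mul_left_comm, mul_comm]
        congr 1
        conv_lhs => enter [1]; rw [← ENNReal.rpow_one (W x)]
        rw [← ENNReal.rpow_add _ _ hx.1 hx.2.1]
        congr 1; rw [hqdef]; field_simp; ring
    _ ≤ C ^ q * (K1 * (K2 * ∫⁻ x, S x * (g x * (S x)⁻¹) ^ p)) := by gcongr
    _ = C ^ q * (K1 * (K2 * ∫⁻ x, g x ^ p * W x)) := by
        congr 3
        apply lintegral_congr_ae
        filter_upwards [hWS] with x hx
        rw [ENNReal.mul_rpow_of_nonneg _ _ (by linarith), mul_left_comm]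
        congr 1
        rw [hx.2.2, ← ENNReal.rpow_neg, ← ENNReal.rpow_mul, ← ENNReal.rpow_add _ _ hx.1 hx.2.1]
        conv_rhs => rw [← ENNReal.rpow_one (W x)]
        congr 1; field_simp; ring
    _ = _ := by ring

end doubling

lemma lint_ne_zero {n : ℕ} (W : EuclideanSpace ℝ (Fin n) → ℝ≥0∞) (hW : Measurable W)
    (h : ∀ᵐ x, W x ≠ 0) (a : EuclideanSpace ℝ (Fin n)) (r : ℝ) (hr : 0 < r) :
    ∫⁻ x in ball a r, W x ≠ 0 := by
  intro h0
  rw [lintegral_eq_zero_iff hW] at h0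
  have : ∀ᵐ x ∂(volume.restrict (ball a r)), False := by
    filter_upwards [h0, ae_restrict_of_ae h] with x h1 h2
    exact h2 h1
  rw [Filter.eventually_false_iff_eq_bot, ae_eq_bot, Measure.restrict_eq_zero] at this
  exact (measure_ball_pos volume a hr).ne' this


/-- Let `1 < p < ∞` and `w ∈ A_p`. Then there is `C > 0`, independent of
`f`, `a`, `r`, such that for every `a ∈ ℝⁿ`, `r > 0` and `f ∈ L^{p,w}_loc`:
`‖Mf‖_{L^{p,w}(B(a,r))} ≤ C·w(B(a,r))^{1/p}·sup_{r<t<∞} w(B(a,t))^{-1/p}‖f‖_{L^{p,w}(B(a,t))}`. -/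
theorem statement4 {n : ℕ} (p : ℝ) (hp : 1 < p)
    (w : EuclideanSpace ℝ (Fin n) → ℝ) (hw : IsWeight w) (hAp : MuckAp p w) :
    ∃ C : ℝ, 0 < C ∧
      ∀ (a : EuclideanSpace ℝ (Fin n)) (r : ℝ) (f : EuclideanSpace ℝ (Fin n) → ℝ),
        0 < r → MemLocWLp p w f →
        wLpE p w (HLMax f) (ball a r) ≤
          ENNReal.ofReal C * wSet w (ball a r) ^ (1 / p) *
            ⨆ t : Set.Ioi r, wSet w (ball a t.1) ^ (-(1 / p)) * wLp p w f (ball a t.1) := by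
  have hp0 : 0 < p := by linarith
  have hp1 : 0 < p - 1 := by linarith
  obtain ⟨hwm, hwn, hwl, hwp⟩ := hw
  obtain ⟨C0, hC0, hA0⟩ := hAp
  have hW : Measurable fun x => ENNReal.ofReal (w x) := by fun_prop
  have hS : Measurable fun x => ENNReal.ofReal (w x ^ (-(1 / (p - 1)))) := by fun_prop
  have hWS : ∀ᵐ x, ENNReal.ofReal (w x) ≠ 0 ∧ ENNReal.ofReal (w x) ≠ ⊤ ∧
      ENNReal.ofReal (w x ^ (-(1 / (p - 1)))) = ENNReal.ofReal (w x) ^ (-(1 / (p - 1))) := by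
    filter_upwards [hwp] with x hx
    exact ⟨by simpa using hx, ENNReal.ofReal_ne_top, (ENNReal.ofReal_rpow_of_pos hx).symm⟩
  have hW0 : ∀ (a : EuclideanSpace ℝ (Fin n)) (r : ℝ), 0 < r →
      (∫⁻ x in ball a r, ENNReal.ofReal (w x)) ≠ 0 ∧
      (∫⁻ x in ball a r, ENNReal.ofReal (w x)) ≠ ⊤ := by
    intro a r hr
    refine ⟨lint_ne_zero _ hW (hWS.mono fun x hx => hx.1) a r hr, ?_⟩
    have h1 : IntegrableOn w (ball a r) :=
      (hwl.integrableOn_isCompact (isCompact_closedBall a r)).mono_set ball_subset_closedBall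
    exact h1.lintegral_lt_top.ne
  have hS0 : ∀ (a : EuclideanSpace ℝ (Fin n)) (r : ℝ), 0 < r →
      (∫⁻ x in ball a r, ENNReal.ofReal (w x ^ (-(1 / (p - 1))))) ≠ 0 ∧
      (∫⁻ x in ball a r, ENNReal.ofReal (w x ^ (-(1 / (p - 1))))) ≠ ⊤ := by
    intro a r hr
    refine ⟨lint_ne_zero _ hS (hwp.mono fun x hx => ?_) a r hr, ?_⟩
    · have := Real.rpow_pos_of_pos hx (-(1 / (p - 1)))
      simpa using this
    · intro htop
      have h := hA0 a r hr
      have hV0 : (volume (ball a r))⁻¹ ≠ 0 := ENNReal.inv_ne_zero.2 measure_ball_lt_top.ne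
      rw [htop, ENNReal.mul_top hV0, ENNReal.top_rpow_of_pos hp1,
        ENNReal.mul_top (mul_ne_zero hV0 (hW0 a r hr).1)] at h
      exact ENNReal.ofReal_ne_top (top_le_iff.1 h)
  have hA : ∀ (a : EuclideanSpace ℝ (Fin n)) (r : ℝ), 0 < r →
      (∫⁻ x in ball a r, ENNReal.ofReal (w x)) *
        (∫⁻ x in ball a r, ENNReal.ofReal (w x ^ (-(1 / (p - 1))))) ^ (p - 1) ≤
        ENNReal.ofReal C0 * volume (ball a r) ^ p := by
    intro a r hr
    have h := hA0 a r hr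
    have hV0 : volume (ball a r) ≠ 0 := (measure_ball_pos volume a hr).ne'
    have hVt : volume (ball a r) ≠ ⊤ := measure_ball_lt_top.ne
    set V := volume (ball a r)
    have a1 : V ^ p = V ^ (p - 1) * V := by
      conv_rhs => rw [← ENNReal.rpow_one V, ← ENNReal.rpow_mul, one_mul]
      rw [← ENNReal.rpow_add _ _ hV0 hVt]; congr 1; ring
    have hVp0 : V ^ (p - 1) ≠ 0 := (ENNReal.rpow_pos (pos_iff_ne_zero.2 hV0) hVt).ne'
    have hVpt : V ^ (p - 1) ≠ ⊤ := ENNReal.rpow_ne_top_of_nonneg hp1.le hVt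
    rw [ENNReal.mul_rpow_of_nonneg _ _ hp1.le, ENNReal.inv_rpow] at h
    set A := ∫⁻ x in ball a r, ENNReal.ofReal (w x)
    set B := (∫⁻ x in ball a r, ENNReal.ofReal (w x ^ (-(1 / (p - 1))))) ^ (p - 1)
    calc A * B = A * B * 1 * 1 := by ring
      _ = A * B * (V⁻¹ * V) * ((V ^ (p - 1))⁻¹ * V ^ (p - 1)) := by
        rw [ENNReal.inv_mul_cancel hV0 hVt, ENNReal.inv_mul_cancel hVp0 hVpt]
      _ = V⁻¹ * A * ((V ^ (p - 1))⁻¹ * B) * (V ^ (p - 1) * V) := by ring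
      _ ≤ _ := by rw [a1]; gcongr
  obtain ⟨K, hK, hmuck⟩ := muckenhoupt p hp _ _ hW hS hWS _ ENNReal.ofReal_ne_top hA hW0 hS0
  have hdW := doub_W p hp _ _ hW hWS _ hA hS0
  have hDt : ENNReal.ofReal C0 * ENNReal.ofReal (5 ^ n) ^ p ≠ ⊤ :=
    ENNReal.mul_ne_top ENNReal.ofReal_ne_top
      (ENNReal.rpow_ne_top_of_nonneg hp0.le ENNReal.ofReal_ne_top)
  set D := ENNReal.ofReal C0 * ENNReal.ofReal (5 ^ n) ^ p
  set A := ENNReal.ofReal (5 ^ n) * ENNReal.ofReal C0 ^ (1 / p) with hAdef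
  have hAt : A ≠ ⊤ := ENNReal.mul_ne_top ENNReal.ofReal_ne_top
    (ENNReal.rpow_ne_top_of_nonneg (by positivity) ENNReal.ofReal_ne_top)
  have hLt : (K * D + A ^ p) ^ (1 / p) ≠ ⊤ := ENNReal.rpow_ne_top_of_nonneg (by positivity)
    (ENNReal.add_ne_top.2 ⟨ENNReal.mul_ne_top hK hDt, ENNReal.rpow_ne_top_of_nonneg hp0.le hAt⟩)
  refine ⟨((K * D + A ^ p) ^ (1 / p)).toReal + 1, by positivity, ?_⟩
  intro a r f hr hf
  obtain ⟨hfm, -⟩ := hf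
  set M := ⨆ t : Set.Ioi r, wSet w (ball a t.1) ^ (-(1 / p)) * wLp p w f (ball a t.1) with hM
  have hgm : Measurable fun x => ENNReal.ofReal |f x| := by fun_prop
  -- the weighted average over large balls
  have havg : ∀ t : ℝ, r < t →
      ∫⁻ x in ball a t, ENNReal.ofReal |f x| ^ p * ENNReal.ofReal (w x) ≤
        M ^ p * ∫⁻ x in ball a t, ENNReal.ofReal (w x) := by
    intro t ht
    obtain ⟨h0, h1⟩ := hW0 a t (hr.trans ht)
    have h := le_iSup (fun t : Set.Ioi r =>
      wSet w (ball a t.1) ^ (-(1 / p)) * wLp p w f (ball a t.1)) ⟨t, ht⟩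
    rw [← hM] at h
    have h2 := ENNReal.rpow_le_rpow h hp0.le
    simp only [wSet, wLp] at h2
    rw [ENNReal.mul_rpow_of_nonneg _ _ hp0.le, ← ENNReal.rpow_mul, ← ENNReal.rpow_mul, neg_mul,
      one_div_mul_cancel hp0.ne', ENNReal.rpow_one, ENNReal.rpow_neg_one, mul_comm,
      ← div_eq_mul_inv, ENNReal.div_le_iff h0 h1] at h2
    exact h2
  let g1 : EuclideanSpace ℝ (Fin n) → ℝ≥0∞ :=
    (ball a (5 * r)).indicator fun x => ENNReal.ofReal |f x|
  have hg1 : Measurable g1 := hgm.indicator measurableSet_ball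
  have hpt : ∀ x ∈ ball a r, HLMax f x ≤ max (HLE g1 x) (A * M) := by
    intro x hx
    apply iSup_le
    rintro ⟨s, hs⟩
    have hs' : 0 < s := hs
    have hxa : dist x a < r := hx
    by_cases hsr : s ≤ r
    · refine le_max_of_le_left ?_
      refine le_trans (le_of_eq ?_) (le_iSup (fun s : Set.Ioi (0:ℝ) =>
        (volume (ball x s.1))⁻¹ * ∫⁻ y in ball x s.1, g1 y) ⟨s, hs⟩)
      dsimp only
      congr 1
      apply setLIntegral_congr_fun measurableSet_ball
      intro y hy
      have : y ∈ ball a (5 * r) := ball_subset_ball' (by linarith) hy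
      simp [g1, this]
    · rw [not_le] at hsr
      refine le_max_of_le_right ?_
      dsimp only
      have hsub : ball x s ⊆ ball a (5 * s) := ball_subset_ball' (by linarith)
      have hvol : volume (ball a (5 * s)) = ENNReal.ofReal (5 ^ n) * volume (ball x s) := by
        rw [vol5, Measure.addHaar_ball_center volume a, Measure.addHaar_ball_center volume x]
      have hV0 : volume (ball a (5 * s)) ≠ 0 :=
        (measure_ball_pos volume a (by linarith)).ne'
      have hVt : volume (ball a (5 * s)) ≠ ⊤ := measure_ball_lt_top.ne
      have k0 : ENNReal.ofReal (5 ^ n) ≠ 0 := by simp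
      have hinv : (volume (ball x s))⁻¹ =
          ENNReal.ofReal (5 ^ n) * (volume (ball a (5 * s)))⁻¹ := by
        rw [hvol, ENNReal.mul_inv (Or.inl k0) (Or.inl ENNReal.ofReal_ne_top), ← mul_assoc,
          ENNReal.mul_inv_cancel k0 ENNReal.ofReal_ne_top, one_mul]
      have hH := holder_W (volume.restrict (ball a (5 * s))) p hp _ _ hW
        (ae_restrict_of_ae hWS) _ hgm
      have hav := havg (5 * s) (by linarith)
      have hAs := hA a (5 * s) (by linarith)
      set V := volume (ball a (5 * s))
      have hmain : V⁻¹ * ∫⁻ y in ball a (5 * s), ENNReal.ofReal |f y| ≤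
          ENNReal.ofReal C0 ^ (1 / p) * M := by
        rw [← ENNReal.rpow_le_rpow_iff hp0, ENNReal.mul_rpow_of_nonneg _ _ hp0.le,
          ENNReal.mul_rpow_of_nonneg _ _ hp0.le, ← ENNReal.rpow_mul,
          one_div_mul_cancel hp0.ne', ENNReal.rpow_one, ENNReal.inv_rpow]
        calc (V ^ p)⁻¹ * (∫⁻ y in ball a (5 * s), ENNReal.ofReal |f y|) ^ p
            ≤ (V ^ p)⁻¹ * ((M ^ p * ∫⁻ x in ball a (5 * s), ENNReal.ofReal (w x)) *
              (∫⁻ x in ball a (5 * s), ENNReal.ofReal (w x ^ (-(1 / (p - 1))))) ^ (p - 1)) := by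
              gcongr
              refine hH.trans ?_
              gcongr
          _ = M ^ p * (V ^ p)⁻¹ * ((∫⁻ x in ball a (5 * s), ENNReal.ofReal (w x)) *
              (∫⁻ x in ball a (5 * s), ENNReal.ofReal (w x ^ (-(1 / (p - 1))))) ^ (p - 1)) := by
              ring
          _ ≤ M ^ p * (V ^ p)⁻¹ * (ENNReal.ofReal C0 * V ^ p) := by gcongr
          _ = ENNReal.ofReal C0 * M ^ p * ((V ^ p)⁻¹ * V ^ p) := by ring
          _ ≤ ENNReal.ofReal C0 * M ^ p * 1 := by gcongr; exact ENNReal.inv_mul_le_one _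
          _ = _ := mul_one _
      calc (volume (ball x s))⁻¹ * ∫⁻ y in ball x s, ENNReal.ofReal |f y|
          ≤ (volume (ball x s))⁻¹ * ∫⁻ y in ball a (5 * s), ENNReal.ofReal |f y| := by
            gcongr
        _ = ENNReal.ofReal (5 ^ n) * (V⁻¹ * ∫⁻ y in ball a (5 * s), ENNReal.ofReal |f y|) := by
            rw [hinv, mul_assoc]
        _ ≤ ENNReal.ofReal (5 ^ n) * (ENNReal.ofReal C0 ^ (1 / p) * M) := by gcongr
        _ = A * M := by rw [hAdef, mul_assoc]
  have hIntg : ∫⁻ x in ball a r, HLMax f x ^ p * ENNReal.ofReal (w x) ≤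
      (K * D + A ^ p) * wSet w (ball a r) * M ^ p := by
    calc ∫⁻ x in ball a r, HLMax f x ^ p * ENNReal.ofReal (w x)
        ≤ ∫⁻ x in ball a r, (HLE g1 x ^ p * ENNReal.ofReal (w x) +
            (A * M) ^ p * ENNReal.ofReal (w x)) := by
          apply setLIntegral_mono' measurableSet_ball
          intro x hx
          rw [← add_mul]
          gcongr
          refine (ENNReal.rpow_le_rpow (hpt x hx) hp0.le).trans ?_
          rcases max_choice (HLE g1 x) (A * M) with h | h <;> rw [h]
          · exact le_self_add
          · exact le_add_self
      _ = (∫⁻ x in ball a r, HLE g1 x ^ p * ENNReal.ofReal (w x)) +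
            (A * M) ^ p * wSet w (ball a r) := by
          rw [lintegral_add_right _ (by fun_prop), lintegral_const_mul _ hW]; rfl
      _ ≤ K * (M ^ p * (D * wSet w (ball a r))) + (A * M) ^ p * wSet w (ball a r) := by
          gcongr
          refine (setLIntegral_le_lintegral _ _).trans ((hmuck g1 hg1).trans ?_)
          gcongr
          have e : ∫⁻ x, g1 x ^ p * ENNReal.ofReal (w x) =
              ∫⁻ x in ball a (5 * r), ENNReal.ofReal |f x| ^ p * ENNReal.ofReal (w x) := by
            rw [← lintegral_indicator measurableSet_ball]
            congr 1; ext x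
            by_cases hx : x ∈ ball a (5 * r)
            · simp only [g1, indicator_of_mem hx]
            · simp only [g1, indicator_of_notMem hx, ENNReal.zero_rpow_of_pos hp0, zero_mul]
          rw [e]
          refine (havg (5 * r) (by linarith)).trans ?_
          gcongr
          exact hdW a r hr
      _ = _ := by rw [ENNReal.mul_rpow_of_nonneg _ _ hp0.le]; ring
  calc wLpE p w (HLMax f) (ball a r)
      ≤ ((K * D + A ^ p) * wSet w (ball a r) * M ^ p) ^ (1 / p) :=
        ENNReal.rpow_le_rpow hIntg (by positivity)
    _ = (K * D + A ^ p) ^ (1 / p) * wSet w (ball a r) ^ (1 / p) * M := by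
        rw [ENNReal.mul_rpow_of_nonneg _ _ (by positivity),
          ENNReal.mul_rpow_of_nonneg _ _ (by positivity), ← ENNReal.rpow_mul,
          mul_one_div_cancel hp0.ne', ENNReal.rpow_one]
    _ ≤ _ := by
        gcongr
        rw [← ENNReal.ofReal_toReal hLt]
        exact ENNReal.ofReal_le_ofReal (by rw [ENNReal.ofReal_toReal hLt]; linarith)
end

section
/- Let 1 < p < ∞ and w ∈ A_p, and let M be the Hardy–Littlewood maximal operator. Suppose ψ₁ and ψ₂ are positive functions on ℝⁿ × (0,∞) for which there is a constant C > 0, independent of a and r, with sup_{r<t<∞} ψ₁(a,t) ≤ C·ψ₂(a,r) for every (a,r) ∈ ℝⁿ × (0,∞). Then M is bounded from M^{p,w}_{ψ₁} to M^{p,w}_{ψ₂}: there is C' > 0 such that ‖Mf‖_{M^{p,w}_{ψ₂}} ≤ C'·‖f‖_{M^{p,w}_{ψ₁}} for every f ∈ M^{p,w}_{ψ₁}. -/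
open MeasureTheory Metric Set
open scoped ENNReal

noncomputable section

abbrev Eu (n : ℕ) := EuclideanSpace ℝ (Fin n)

/-- Dyadic-radius centered maximal function with respect to a measure. -/
def dyMax {n : ℕ} (μ : Measure (Eu n)) (f : Eu n → ℝ≥0∞) (x : Eu n) : ℝ≥0∞ :=
  ⨆ k : ℤ, (∫⁻ y in ball x ((2 : ℝ) ^ k), f y ∂μ) / μ (ball x ((2 : ℝ) ^ k))

lemma measurable_ball_lintegral {n : ℕ} (μ : Measure (Eu n)) [SFinite μ] (f : Eu n → ℝ≥0∞)
    (hf : Measurable f) (r : ℝ) : Measurable fun x => ∫⁻ y in ball x r, f y ∂μ := by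
  have h : Measurable (Function.uncurry fun x y : Eu n => (ball x r).indicator f y) := by
    have hs : MeasurableSet {z : Eu n × Eu n | dist z.2 z.1 < r} :=
      measurableSet_lt (by fun_prop) measurable_const
    have := (hf.comp measurable_snd).indicator hs (α := Eu n × Eu n)
    convert this using 1
    ext z; rfl
  have := h.lintegral_prod_right' (ν := μ)
  convert this using 2 with x
  rw [← lintegral_indicator measurableSet_ball]
  rfl

lemma measurable_dyMax {n : ℕ} (μ : Measure (Eu n)) [SFinite μ] (f : Eu n → ℝ≥0∞)
    (hf : Measurable f) : Measurable (dyMax μ f) := by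
  refine Measurable.iSup fun k => ?_
  refine (measurable_ball_lintegral μ f hf _).div ?_
  have := measurable_ball_lintegral μ 1 measurable_one ((2:ℝ)^k)
  simpa using this

lemma weak_type (n : ℕ) : ∃ N : ℕ, ∀ (μ : Measure (Eu n)) (f : Eu n → ℝ≥0∞) (t : ℝ≥0∞),
    t * μ {x | t < dyMax μ f x} ≤ N * ∫⁻ x, f x ∂μ := by
  obtain ⟨N, τ, hτ, hN⟩ := HasBesicovitchCovering.no_satelliteConfig (α := Eu n)
  refine ⟨N, fun μ f t => ?_⟩
  let A : ℕ → Set (Eu n) := fun K => {x | ∃ k : ℤ, k ≤ K ∧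
    t < (∫⁻ y in ball x ((2 : ℝ) ^ k), f y ∂μ) / μ (ball x ((2 : ℝ) ^ k))}
  have hA : {x | t < dyMax μ f x} = ⋃ K, A K := by
    ext x
    simp only [mem_ofPred_eq, dyMax, lt_iSup_iff, mem_iUnion, A]
    constructor
    · rintro ⟨k, hk⟩
      exact ⟨k.toNat, k, Int.self_le_toNat k, hk⟩
    · rintro ⟨K, k, -, hk⟩
      exact ⟨k, hk⟩
  have hmono : Monotone A := by
    intro K L hKL x hx
    obtain ⟨k, hk, h⟩ := hx
    exact ⟨k, hk.trans (by exact_mod_cast hKL), h⟩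
  rw [hA, hmono.measure_iUnion, ENNReal.mul_iSup]
  refine iSup_le fun K => ?_
  have hch : ∀ x : A K, ∃ k : ℤ, k ≤ K ∧
    t < (∫⁻ y in ball x.1 ((2 : ℝ) ^ k), f y ∂μ) / μ (ball x.1 ((2 : ℝ) ^ k)) := fun x => x.2
  choose k hkK hk using hch
  let q : Besicovitch.BallPackage (A K) (Eu n) :=
    { c := fun x => x.1
      r := fun x => (2:ℝ) ^ k x
      rpos := fun x => by positivity
      r_bound := (2:ℝ) ^ (K:ℤ)
      r_le := fun x => zpow_le_zpow_right₀ (by norm_num) (hkK x) }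
  obtain ⟨s, hs, hcov⟩ := Besicovitch.exist_disjoint_covering_families hτ hN q
  have hsub : A K ⊆ ⋃ i : Fin N, ⋃ j ∈ s i, ball (q.c j) (q.r j) := by
    intro x hx
    exact hcov ⟨⟨x, hx⟩, rfl⟩
  have hdis : ∀ i, (s i).PairwiseDisjoint fun j => ball (q.c j) (q.r j) := fun i =>
    (hs i).mono fun j => ball_subset_closedBall
  have hcount : ∀ i, (s i).Countable := fun i =>
    (hdis i).countable_of_isOpen (fun _ _ => isOpen_ball) fun j _ => ⟨q.c j, mem_ball_self (q.rpos j)⟩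
  have hi : ∀ i, t * μ (⋃ j ∈ s i, ball (q.c j) (q.r j)) ≤ ∫⁻ x, f x ∂μ := by
    intro i
    rw [measure_biUnion (hcount i) (hdis i) (fun _ _ => measurableSet_ball), ← ENNReal.tsum_mul_left]
    calc _ ≤ ∑' j : s i, ∫⁻ y in ball (q.c j) (q.r j), f y ∂μ :=
          ENNReal.tsum_le_tsum fun j => ENNReal.mul_le_of_le_div (hk j.1).le
      _ = ∫⁻ y in ⋃ j ∈ s i, ball (q.c j) (q.r j), f y ∂μ :=
          (lintegral_biUnion (hcount i) (fun _ _ => measurableSet_ball) (hdis i) f).symm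
      _ ≤ _ := setLIntegral_le_lintegral _ _
  calc t * μ (A K) ≤ t * ∑ i : Fin N, μ (⋃ j ∈ s i, ball (q.c j) (q.r j)) := by
        gcongr
        refine (measure_mono hsub).trans ?_
        exact measure_iUnion_fintype_le _ _
    _ ≤ ∑ i : Fin N, ∫⁻ x, f x ∂μ := by
        rw [Finset.mul_sum]
        exact Finset.sum_le_sum fun i _ => hi i
    _ = _ := by simp

lemma layer_real_s6 (q : ℝ) (hq : 0 < q) (F : ℝ) (hF : 0 ≤ F) :
    ∫⁻ t in Ioi (0:ℝ), {t | ENNReal.ofReal t < ENNReal.ofReal F}.indicator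
      (fun t => ENNReal.ofReal (t ^ (q - 1))) t = ENNReal.ofReal F ^ q / ENNReal.ofReal q := by
  have hset : MeasurableSet {t : ℝ | ENNReal.ofReal t < ENNReal.ofReal F} :=
    measurableSet_lt (by fun_prop) measurable_const
  rw [lintegral_indicator hset, Measure.restrict_restrict hset]
  have : {t : ℝ | ENNReal.ofReal t < ENNReal.ofReal F} ∩ Ioi 0 = Ioo 0 F := by
    ext t
    simp only [mem_inter_iff, mem_ofPred_eq, mem_Ioi, mem_Ioo]
    constructor
    · rintro ⟨h, h0⟩
      exact ⟨h0, (ENNReal.ofReal_lt_ofReal_iff_of_nonneg h0.le).1 h⟩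
    · rintro ⟨h0, h⟩
      exact ⟨(ENNReal.ofReal_lt_ofReal_iff_of_nonneg h0.le).2 h, h0⟩
  rw [this, restrict_Ioo_eq_restrict_Ioc]
  have hint : IntervalIntegrable (fun t : ℝ => t ^ (q-1)) volume 0 F :=
    intervalIntegral.intervalIntegrable_rpow' (by linarith)
  rw [← ofReal_integral_eq_lintegral_ofReal
    ((intervalIntegrable_iff_integrableOn_Ioc_of_le hF).1 hint)]
  · rw [← intervalIntegral.integral_of_le hF, integral_rpow (Or.inl (by linarith)),
      ENNReal.ofReal_rpow_of_nonneg hF hq.le, ← ENNReal.ofReal_div_of_pos hq]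
    simp [hq.ne']
  · refine (ae_restrict_iff' measurableSet_Ioc).2 (Filter.Eventually.of_forall fun t ht => ?_)
    exact Real.rpow_nonneg ht.1.le _

lemma layer_s6 (q : ℝ) (hq : 0 < q) (F : ℝ≥0∞) :
    ∫⁻ t in Ioi (0:ℝ), {t | ENNReal.ofReal t < F}.indicator
      (fun t => ENNReal.ofReal (t ^ (q - 1))) t = F ^ q / ENNReal.ofReal q := by
  by_cases hF : F = ⊤
  · subst hF
    have htop : (⊤ : ℝ≥0∞) ^ q / ENNReal.ofReal q = ⊤ := by
      rw [ENNReal.top_rpow_of_pos hq, ENNReal.top_div_of_ne_top ENNReal.ofReal_ne_top]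
    rw [htop, eq_top_iff]
    have hle : ∀ m : ℕ, (m : ℝ≥0∞) ^ q / ENNReal.ofReal q ≤ ∫⁻ t in Ioi (0:ℝ),
        {t | ENNReal.ofReal t < ⊤}.indicator (fun t => ENNReal.ofReal (t ^ (q - 1))) t := by
      intro m
      have := layer_real_s6 q hq m (Nat.cast_nonneg m)
      rw [ENNReal.ofReal_natCast] at this
      rw [← this]
      refine lintegral_mono fun t => ?_
      refine indicator_le_indicator_of_subset ?_ (fun _ => zero_le) t
      intro t _
      exact ENNReal.ofReal_lt_top
    have h1 : (⊤ : ℝ≥0∞) ^ q / ENNReal.ofReal q =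
        ⨆ m : ℕ, (m : ℝ≥0∞) ^ q / ENNReal.ofReal q := by
      rw [← ENNReal.iSup_natCast, ← ENNReal.iSup_div]
      congr 1
      exact (ENNReal.orderIsoRpow q hq).map_iSup _
    calc (⊤ : ℝ≥0∞) = _ := htop.symm.trans h1
      _ ≤ _ := iSup_le hle
  · have := layer_real_s6 q hq F.toReal ENNReal.toReal_nonneg
    rwa [ENNReal.ofReal_toReal hF] at this

lemma strong_type (n : ℕ) (q : ℝ) (hq : 1 < q) : ∃ K : ℝ≥0∞, K ≠ ⊤ ∧
    ∀ (μ : Measure (Eu n)) [SFinite μ] (f : Eu n → ℝ≥0∞), Measurable f →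
    ∫⁻ x, dyMax μ f x ^ q ∂μ ≤ K * ∫⁻ x, f x ^ q ∂μ := by
  obtain ⟨N, hN⟩ := weak_type n
  refine ⟨ENNReal.ofReal q * (2 * N * (2 ^ (q - 1) / ENNReal.ofReal (q - 1))), ?_, ?_⟩
  · have : ENNReal.ofReal (q - 1) ≠ 0 := by simpa using hq
    finiteness
  intro μ _ f hf
  have hMm := measurable_dyMax μ f hf
  have hq0 : (ENNReal.ofReal q) ≠ 0 := by simp; linarith
  -- truncation
  have htr : ∀ t : ℝ, 0 < t → ENNReal.ofReal t * μ {x | ENNReal.ofReal t < dyMax μ f x} ≤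
      2 * (N * ∫⁻ x, {x | ENNReal.ofReal t < 2 * f x}.indicator f x ∂μ) := by
    intro t ht
    set g : Eu n → ℝ≥0∞ := {x | ENNReal.ofReal t < 2 * f x}.indicator f with hg
    have hT : ENNReal.ofReal t = 2 * ENNReal.ofReal (t/2) := by
      rw [show (2:ℝ≥0∞) = ENNReal.ofReal 2 by simp, ← ENNReal.ofReal_mul (by norm_num)]
      congr 1; ring
    have hfg : ∀ x, f x ≤ g x + ENNReal.ofReal (t/2) := by
      intro x
      by_cases hx : ENNReal.ofReal t < 2 * f x
      · simp [hg, indicator, hx]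
      · simp only [hg, indicator, mem_ofPred_eq, hx, if_false, zero_add]
        rw [hT, not_lt] at hx
        exact (ENNReal.mul_le_mul_iff_right (by norm_num) (by norm_num)).1 hx
    have hM : ∀ x, dyMax μ f x ≤ dyMax μ g x + ENNReal.ofReal (t/2) := by
      intro x
      refine iSup_le fun k => ?_
      calc _ ≤ (∫⁻ y in ball x ((2 : ℝ) ^ k), g y + ENNReal.ofReal (t/2) ∂μ) / μ (ball x ((2 : ℝ) ^ k)) := by
            gcongr with y; exact hfg y
        _ = (∫⁻ y in ball x ((2 : ℝ) ^ k), g y ∂μ) / μ (ball x ((2 : ℝ) ^ k)) +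
            ENNReal.ofReal (t/2) * (μ (ball x ((2 : ℝ) ^ k)) / μ (ball x ((2 : ℝ) ^ k))) := by
            rw [lintegral_add_right _ measurable_const, ENNReal.add_div]
            simp [mul_div_assoc]
        _ ≤ _ := by
            gcongr
            · exact le_iSup (fun k : ℤ => (∫⁻ y in ball x ((2 : ℝ) ^ k), g y ∂μ) / μ (ball x ((2 : ℝ) ^ k))) k
            · exact mul_le_of_le_one_right zero_le ENNReal.div_self_le_one
    have hsub : {x | ENNReal.ofReal t < dyMax μ f x} ⊆ {x | ENNReal.ofReal (t/2) < dyMax μ g x} := by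
      intro x hx
      have h1 := lt_of_lt_of_le hx (hM x)
      rw [hT, two_mul] at h1
      exact lt_of_add_lt_add_right h1
    calc _ ≤ 2 * (ENNReal.ofReal (t/2) * μ {x | ENNReal.ofReal (t/2) < dyMax μ g x}) := by
          rw [← mul_assoc, ← hT]
          exact mul_le_mul' le_rfl (measure_mono hsub)
      _ ≤ _ := mul_le_mul' le_rfl (hN μ g _)
  have hlayer : ∫⁻ x, dyMax μ f x ^ q ∂μ = ENNReal.ofReal q *
      ∫⁻ t in Ioi (0:ℝ), ENNReal.ofReal (t ^ (q-1)) * μ {x | ENNReal.ofReal t < dyMax μ f x} := by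
    have h1 : ∀ x, dyMax μ f x ^ q = ENNReal.ofReal q * ∫⁻ t in Ioi (0:ℝ),
        {t | ENNReal.ofReal t < dyMax μ f x}.indicator (fun t => ENNReal.ofReal (t ^ (q - 1))) t := by
      intro x
      rw [layer_s6 q (by linarith), ENNReal.mul_div_cancel hq0 ENNReal.ofReal_ne_top]
    have hmeas : Measurable (Function.uncurry fun (x : Eu n) (t : ℝ) =>
        {t | ENNReal.ofReal t < dyMax μ f x}.indicator (fun t => ENNReal.ofReal (t ^ (q - 1))) t) := by
      have hs : MeasurableSet {z : Eu n × ℝ | ENNReal.ofReal z.2 < dyMax μ f z.1} :=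
        measurableSet_lt (by fun_prop) (by fun_prop)
      have h2 : Measurable fun z : Eu n × ℝ => ENNReal.ofReal (z.2 ^ (q-1)) := by fun_prop
      exact h2.indicator hs
    simp_rw [h1]
    rw [lintegral_const_mul' _ _ ENNReal.ofReal_ne_top,
      lintegral_lintegral_swap hmeas.aemeasurable]
    congr 1
    refine lintegral_congr fun t => ?_
    have : (fun x => {t | ENNReal.ofReal t < dyMax μ f x}.indicator (fun t => ENNReal.ofReal (t ^ (q - 1))) t)
        = {x | ENNReal.ofReal t < dyMax μ f x}.indicator (fun _ => ENNReal.ofReal (t ^ (q-1))) := by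
      ext x; simp [indicator]
    rw [this, lintegral_indicator_const (measurableSet_lt measurable_const hMm)]
  rw [hlayer]
  have hmeas : Measurable (Function.uncurry fun (t : ℝ) (x : Eu n) =>
      f x * {t | ENNReal.ofReal t < 2 * f x}.indicator (fun t => ENNReal.ofReal (t ^ (q - 1 - 1))) t) := by
    have hs : MeasurableSet {z : ℝ × Eu n | ENNReal.ofReal z.1 < 2 * f z.2} :=
      measurableSet_lt (by fun_prop) (by fun_prop)
    have h2 : Measurable fun z : ℝ × Eu n => ENNReal.ofReal (z.1 ^ (q-1-1)) := by fun_prop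
    exact (hf.comp measurable_snd).mul (h2.indicator hs)
  rw [mul_assoc]
  gcongr
  calc ∫⁻ t in Ioi (0:ℝ), ENNReal.ofReal (t ^ (q-1)) * μ {x | ENNReal.ofReal t < dyMax μ f x}
      ≤ ∫⁻ t in Ioi (0:ℝ), (2 * N) * ∫⁻ x, f x * {t | ENNReal.ofReal t < 2 * f x}.indicator
        (fun t => ENNReal.ofReal (t ^ (q - 1 - 1))) t ∂μ := by
        refine setLIntegral_mono' measurableSet_Ioi fun t ht => ?_
        have ht' : (0:ℝ) < t := ht
        have e1 : ENNReal.ofReal (t ^ (q-1)) = ENNReal.ofReal (t ^ (q-1-1)) * ENNReal.ofReal t := by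
          rw [← ENNReal.ofReal_mul (by positivity), ← Real.rpow_add_one ht'.ne', sub_add_cancel]
        have e2 : (fun x => f x * {t | ENNReal.ofReal t < 2 * f x}.indicator
            (fun t => ENNReal.ofReal (t ^ (q - 1 - 1))) t) = fun x => ENNReal.ofReal (t ^ (q-1-1)) *
            {x | ENNReal.ofReal t < 2 * f x}.indicator f x := by
          ext x
          by_cases hx : ENNReal.ofReal t < 2 * f x <;> simp [indicator, mul_comm]
        rw [e1, mul_assoc, e2, lintegral_const_mul]
        · calc _ ≤ ENNReal.ofReal (t ^ (q-1-1)) * (2 * (N * ∫⁻ x, {x | ENNReal.ofReal t < 2 * f x}.indicator f x ∂μ)) :=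
              mul_le_mul' le_rfl (htr t ht')
            _ = _ := by simp only [mul_assoc, mul_left_comm]
        · exact hf.indicator (measurableSet_lt measurable_const (by fun_prop))
    _ = (2 * N) * ∫⁻ x, f x * ((2 * f x) ^ (q-1) / ENNReal.ofReal (q-1)) ∂μ := by
        rw [lintegral_const_mul' _ _ (by finiteness),
          lintegral_lintegral_swap hmeas.aemeasurable]
        congr 1
        refine lintegral_congr fun x => ?_
        rw [lintegral_const_mul, layer_s6 _ (by linarith)]
        refine Measurable.indicator (by fun_prop) (measurableSet_lt (by fun_prop) measurable_const)
    _ = _ := by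
        rw [mul_assoc (2 * (N:ℝ≥0∞)), ← lintegral_const_mul (2 ^ (q - 1) / ENNReal.ofReal (q - 1)) (by fun_prop)]
        congr 1
        refine lintegral_congr fun x => ?_
        rw [ENNReal.mul_rpow_of_nonneg _ _ (by linarith)]
        have : f x ^ q = f x * f x ^ (q-1) := by
          conv_lhs => rw [show q = 1 + (q-1) by ring, ENNReal.rpow_add_of_nonneg _ _ (by norm_num) (by linarith), ENNReal.rpow_one]
        rw [this]
        simp only [div_eq_mul_inv]
        ring

end

noncomputable section

/-- The data of an `A_p` weight `W` with dual weight `S`, in `ℝ≥0∞` form. -/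
structure ApData {n : ℕ} (p : ℝ) (W S : Eu n → ℝ≥0∞) (C : ℝ≥0∞) : Prop where
  hp : 1 < p
  hW : Measurable W
  hS : Measurable S
  ae : ∀ᵐ x, W x ≠ 0 ∧ W x ≠ ⊤ ∧ S x = W x ^ (-(1 / (p - 1)))
  hC : C ≠ ⊤
  Ap : ∀ a r, 0 < r → (∫⁻ x in ball a r, W x) * (∫⁻ x in ball a r, S x) ^ (p - 1) ≤
    C * volume (ball a r) ^ p
  W0 : ∀ a r, 0 < r → ∫⁻ x in ball a r, W x ≠ 0
  WT : ∀ a r, 0 < r → ∫⁻ x in ball a r, W x ≠ ⊤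
  S0 : ∀ a r, 0 < r → ∫⁻ x in ball a r, S x ≠ 0
  ST : ∀ a r, 0 < r → ∫⁻ x in ball a r, S x ≠ ⊤

lemma vol_scale {n : ℕ} (x y : Eu n) (c r : ℝ) (hc : 0 < c) :
    volume (ball x (c * r)) = ENNReal.ofReal (c ^ n) * volume (ball y r) := by
  rw [Measure.addHaar_ball_mul_of_pos volume x hc, Measure.addHaar_ball_center volume y]
  simp

lemma vol_ne_zero {n : ℕ} (x : Eu n) (r : ℝ) (hr : 0 < r) : volume (ball x r) ≠ 0 :=
  (measure_ball_pos _ _ hr).ne'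

lemma vol_ne_top {n : ℕ} (x : Eu n) (r : ℝ) : volume (ball x r) ≠ ⊤ :=
  measure_ball_lt_top.ne

lemma ApData.holder {n : ℕ} {p : ℝ} {W S : Eu n → ℝ≥0∞} {C : ℝ≥0∞} (h : ApData p W S C)
    (f : Eu n → ℝ≥0∞) (hf : Measurable f) (B : Set (Eu n)) :
    (∫⁻ x in B, f x) ^ p ≤ (∫⁻ x in B, f x ^ p * W x) * (∫⁻ x in B, S x) ^ (p - 1) := by
  have hp := h.hp
  have hp0 : 0 < p := by linarith
  have hp1 : 0 < p - 1 := by linarith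
  have hW := h.hW
  have hconj := Real.HolderConjugate.conjExponent hp
  have H := ENNReal.lintegral_mul_le_Lp_mul_Lq (volume.restrict B) hconj
    (f := fun x => f x * W x ^ (1 / p)) (g := fun x => W x ^ (-(1 / p)))
    (by fun_prop) (by fun_prop)
  have ae := ae_restrict_of_ae (s := B) h.ae
  have e1 : ∫⁻ x in B, ((fun x => f x * W x ^ (1 / p)) * (fun x => W x ^ (-(1 / p)))) x =
      ∫⁻ x in B, f x := by
    refine lintegral_congr_ae ?_
    filter_upwards [ae] with x hx
    simp only [Pi.mul_apply]
    rw [mul_assoc, ← ENNReal.rpow_add _ _ hx.1 hx.2.1]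
    simp
  have e2 : ∫⁻ x in B, (f x * W x ^ (1 / p)) ^ p = ∫⁻ x in B, f x ^ p * W x := by
    refine lintegral_congr fun x => ?_
    rw [ENNReal.mul_rpow_of_nonneg _ _ hp0.le, ← ENNReal.rpow_mul]
    simp [hp0.ne']
  have e3 : ∫⁻ x in B, (W x ^ (-(1 / p))) ^ p.conjExponent = ∫⁻ x in B, S x := by
    refine lintegral_congr_ae ?_
    filter_upwards [ae] with x hx
    rw [hx.2.2, ← ENNReal.rpow_mul]
    congr 1
    simp only [Real.conjExponent]
    field_simp
  rw [e1, e2, e3] at H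
  calc _ ≤ _ := ENNReal.rpow_le_rpow H hp0.le
    _ = _ := by
      rw [ENNReal.mul_rpow_of_nonneg _ _ hp0.le, ← ENNReal.rpow_mul, ← ENNReal.rpow_mul]
      congr 2
      · simp [hp0.ne']
      · simp only [Real.conjExponent]
        field_simp

lemma ApData.avg {n : ℕ} {p : ℝ} {W S : Eu n → ℝ≥0∞} {C : ℝ≥0∞} (h : ApData p W S C)
    (f : Eu n → ℝ≥0∞) (hf : Measurable f) (a : Eu n) (r : ℝ) (hr : 0 < r) :
    (∫⁻ x in ball a r, W x) * (∫⁻ x in ball a r, f x) ^ p ≤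
      C * volume (ball a r) ^ p * (∫⁻ x in ball a r, f x ^ p * W x) := by
  calc _ ≤ (∫⁻ x in ball a r, W x) *
        ((∫⁻ x in ball a r, f x ^ p * W x) * (∫⁻ x in ball a r, S x) ^ (p - 1)) :=
        mul_le_mul' le_rfl (h.holder f hf _)
    _ = ((∫⁻ x in ball a r, W x) * (∫⁻ x in ball a r, S x) ^ (p - 1)) *
        (∫⁻ x in ball a r, f x ^ p * W x) := by ring
    _ ≤ _ := mul_le_mul' (h.Ap a r hr) le_rfl

lemma ApData.doubling {n : ℕ} {p : ℝ} {W S : Eu n → ℝ≥0∞} {C : ℝ≥0∞} (h : ApData p W S C)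
    (a : Eu n) (r : ℝ) (hr : 0 < r) :
    (∫⁻ x in ball a (2 * r), W x) ≤
      C * ENNReal.ofReal (2 ^ n) ^ p * (∫⁻ x in ball a r, W x) := by
  have hp0 : 0 < p := by linarith [h.hp]
  have hsub : ball a r ⊆ ball a (2 * r) := ball_subset_ball (by linarith)
  have H := h.avg ((ball a r).indicator 1) (measurable_one.indicator measurableSet_ball) a (2 * r)
    (by linarith)
  have e1 : ∫⁻ x in ball a (2 * r), (ball a r).indicator (1 : Eu n → ℝ≥0∞) x = volume (ball a r) := by
    rw [lintegral_indicator_one measurableSet_ball, Measure.restrict_apply measurableSet_ball,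
      inter_eq_left.2 hsub]
  have e2 : ∫⁻ x in ball a (2 * r), (ball a r).indicator (1 : Eu n → ℝ≥0∞) x ^ p * W x =
      ∫⁻ x in ball a r, W x := by
    have : ∀ x, (ball a r).indicator (1 : Eu n → ℝ≥0∞) x ^ p * W x = (ball a r).indicator W x := by
      intro x
      by_cases hx : x ∈ ball a r
      · rw [indicator_of_mem hx, indicator_of_mem hx]; simp
      · rw [indicator_of_notMem hx, indicator_of_notMem hx]; simp [hp0]
    simp_rw [this]
    rw [lintegral_indicator measurableSet_ball, Measure.restrict_restrict measurableSet_ball,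
      inter_eq_left.2 hsub]
  rw [e1, e2, vol_scale a a 2 r (by norm_num), ENNReal.mul_rpow_of_nonneg _ _ hp0.le] at H
  have hv0 : volume (ball a r) ^ p ≠ 0 := by
    simp [ENNReal.rpow_eq_zero_iff, vol_ne_zero a r hr, hp0.le, hp0.not_gt]
  have hvT : volume (ball a r) ^ p ≠ ⊤ := ENNReal.rpow_ne_top_of_nonneg hp0.le (vol_ne_top a r)
  refine (ENNReal.mul_le_mul_iff_left hv0 hvT).1 (H.trans (le_of_eq ?_))
  ring

lemma ApData.pointwise {n : ℕ} {p : ℝ} {W S : Eu n → ℝ≥0∞} {C : ℝ≥0∞} (h : ApData p W S C)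
    (f : Eu n → ℝ≥0∞) (hf : Measurable f) (x : Eu n) :
    dyMax volume f x ^ (p - 1) ≤ C * ENNReal.ofReal (4 ^ n) ^ p *
      dyMax (volume.withDensity W) (fun y =>
        dyMax (volume.withDensity S) (fun z => f z / S z) y ^ (p - 1) / W y) x := by
  have hp0 : 0 < p := by linarith [h.hp]
  have hp1 : 0 < p - 1 := by linarith [h.hp]
  have hS := h.hS
  have hW := h.hW
  set G := dyMax (volume.withDensity S) (fun z => f z / S z) with hG
  have hGm : Measurable G := measurable_dyMax _ _ (by fun_prop)
  set g : Eu n → ℝ≥0∞ := fun y => G y ^ (p - 1) / W y with hg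
  have hgm : Measurable g := by fun_prop
  rw [← ENNReal.le_rpow_inv_iff hp1]
  refine iSup_le fun k => ?_
  rw [ENNReal.le_rpow_inv_iff hp1]
  set ρ : ℝ := (2:ℝ) ^ k with hρ
  have hρ0 : 0 < ρ := by positivity
  set I := ∫⁻ y in ball x ρ, f y with hI
  set v := volume (ball x ρ) with hv
  set V := ∫⁻ y in ball x (4 * ρ), S y with hV
  have hV0 : V ≠ 0 := h.S0 x _ (by positivity)
  have hVT : V ≠ ⊤ := h.ST x _ (by positivity)
  have hv0 : v ≠ 0 := vol_ne_zero _ _ hρ0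
  have hvT : v ≠ ⊤ := vol_ne_top _ _
  set m := ∫⁻ y in ball x ρ, W y with hm
  have hm0 : m ≠ 0 := h.W0 x _ hρ0
  have hmT : m ≠ ⊤ := h.WT x _ hρ0
  have hball : ∀ (T : Eu n → ℝ≥0∞) (y : Eu n) (r : ℝ),
      volume.withDensity T (ball y r) = ∫⁻ z in ball y r, T z :=
    fun T y r => withDensity_apply _ measurableSet_ball
  have hST : ∀ᵐ y, S y ≠ 0 ∧ S y ≠ ⊤ := by
    filter_upwards [h.ae] with y hy
    rw [hy.2.2]
    constructor
    · simp [ENNReal.rpow_eq_zero_iff, hy.1, hy.2.1]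
    · simp [ENNReal.rpow_eq_top_iff, hy.1, hy.2.1]
  have hIG : ∀ y ∈ ball x ρ, I / V ≤ G y := by
    intro y hy
    have hy' : dist y x < ρ := hy
    have hy2 : ball x ρ ⊆ ball y (2 ^ (k + 1)) := by
      intro z hz
      have hz' : dist z x < ρ := hz
      rw [mem_ball, zpow_add_one₀ (by norm_num)]
      have := dist_triangle_right z y x
      linarith
    have hy3 : ball y (2 ^ (k + 1)) ⊆ ball x (4 * ρ) := by
      intro z hz
      rw [mem_ball, zpow_add_one₀ (by norm_num)] at hz
      rw [mem_ball]
      have := dist_triangle z y x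
      linarith
    have e : ∫⁻ z in ball y (2 ^ (k + 1)), f z / S z ∂(volume.withDensity S) =
        ∫⁻ z in ball y (2 ^ (k + 1)), f z := by
      rw [setLIntegral_withDensity_eq_setLIntegral_mul _ hS (by fun_prop) measurableSet_ball]
      refine lintegral_congr_ae ?_
      filter_upwards [ae_restrict_of_ae hST] with z hz
      exact ENNReal.mul_div_cancel hz.1 hz.2
    calc I / V ≤ (∫⁻ z in ball y (2 ^ (k + 1)), f z) / ∫⁻ z in ball y (2 ^ (k + 1)), S z := by
          refine ENNReal.div_le_div ?_ ?_
          · exact lintegral_mono_set hy2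
          · exact lintegral_mono_set hy3
      _ ≤ G y := by
          rw [← e, ← hball]
          exact le_iSup (fun k : ℤ => (∫⁻ z in ball y (2 ^ k), f z / S z ∂(volume.withDensity S)) /
            volume.withDensity S (ball y (2 ^ k))) (k + 1)
  have h1 : (I / V) ^ (p - 1) * v ≤ dyMax (volume.withDensity W) g x * m := by
    have hgle : (∫⁻ y in ball x ρ, g y ∂(volume.withDensity W)) / m ≤
        dyMax (volume.withDensity W) g x := by
      rw [hm, ← hball]
      exact le_iSup (fun k : ℤ => (∫⁻ z in ball x (2 ^ k), g z ∂(volume.withDensity W)) /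
            volume.withDensity W (ball x (2 ^ k))) k
    rw [ENNReal.div_le_iff hm0 hmT] at hgle
    refine le_trans ?_ hgle
    rw [setLIntegral_withDensity_eq_setLIntegral_mul _ hW hgm measurableSet_ball]
    calc (I / V) ^ (p - 1) * v = ∫⁻ y in ball x ρ, (I / V) ^ (p - 1) := by simp [hv]
      _ ≤ ∫⁻ y in ball x ρ, G y ^ (p - 1) := by
          refine setLIntegral_mono' measurableSet_ball fun y hy => ?_
          exact ENNReal.rpow_le_rpow (hIG y hy) hp1.le
      _ = _ := by
          refine lintegral_congr_ae ?_
          filter_upwards [ae_restrict_of_ae h.ae] with z hz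
          exact (ENNReal.mul_div_cancel hz.1 hz.2.1).symm
  have hA : m * V ^ (p - 1) ≤ C * (ENNReal.ofReal (4 ^ n) ^ p * v ^ p) := by
    have := h.Ap x (4 * ρ) (by positivity)
    rw [vol_scale x x 4 ρ (by norm_num), ENNReal.mul_rpow_of_nonneg _ _ hp0.le] at this
    refine le_trans (mul_le_mul' (lintegral_mono_set (ball_subset_ball (by linarith))) le_rfl) this
  have hvp : v ^ p = v * v ^ (p - 1) := by
    conv_lhs => rw [show p = 1 + (p - 1) by ring, ENNReal.rpow_add_of_nonneg _ _ (by norm_num) hp1.le,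
      ENNReal.rpow_one]
  have hvp0 : v ^ p ≠ 0 := by
    simp [ENNReal.rpow_eq_zero_iff, hv0, hp0.le, hp0.not_gt]
  have hvpT : v ^ p ≠ ⊤ := ENNReal.rpow_ne_top_of_nonneg hp0.le hvT
  refine (ENNReal.mul_le_mul_iff_left hvp0 hvpT).1 ?_
  calc (I / v) ^ (p - 1) * v ^ p = I ^ (p - 1) * v := by
        rw [hvp, mul_left_comm, ← ENNReal.mul_rpow_of_nonneg _ _ hp1.le,
          ENNReal.div_mul_cancel hv0 hvT, mul_comm]
    _ = (I / V) ^ (p - 1) * v * V ^ (p - 1) := by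
        rw [mul_right_comm, ← ENNReal.mul_rpow_of_nonneg _ _ hp1.le, ENNReal.div_mul_cancel hV0 hVT]
    _ ≤ dyMax (volume.withDensity W) g x * m * V ^ (p - 1) := mul_le_mul' h1 le_rfl
    _ = dyMax (volume.withDensity W) g x * (m * V ^ (p - 1)) := by ring
    _ ≤ dyMax (volume.withDensity W) g x * (C * (ENNReal.ofReal (4 ^ n) ^ p * v ^ p)) :=
        mul_le_mul' le_rfl hA
    _ = _ := by ring

lemma ApData.muckenhoupt {n : ℕ} {p : ℝ} {W S : Eu n → ℝ≥0∞} {C : ℝ≥0∞} (h : ApData p W S C) :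
    ∃ K : ℝ≥0∞, K ≠ ⊤ ∧ ∀ f : Eu n → ℝ≥0∞, Measurable f →
      ∫⁻ x, dyMax volume f x ^ p * W x ≤ K * ∫⁻ x, f x ^ p * W x := by
  have hp := h.hp
  have hp0 : 0 < p := by linarith [h.hp]
  have hp1 : 0 < p - 1 := by linarith [h.hp]
  have hS := h.hS
  have hW := h.hW
  set q := p / (p - 1) with hq
  have hq1 : 1 < q := by rw [hq, one_lt_div hp1]; linarith
  have hq0 : 0 < q := by linarith
  obtain ⟨K₁, hK₁, H₁⟩ := strong_type n q hq1
  obtain ⟨K₂, hK₂, H₂⟩ := strong_type n p hp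
  have hC := h.hC
  refine ⟨(C * ENNReal.ofReal (4 ^ n) ^ p) ^ q * (K₁ * K₂), ?_, ?_⟩
  · have : (C * ENNReal.ofReal (4 ^ n) ^ p) ^ q ≠ ⊤ := by
      refine ENNReal.rpow_ne_top_of_nonneg hq0.le (ENNReal.mul_ne_top hC ?_)
      exact ENNReal.rpow_ne_top_of_nonneg hp0.le ENNReal.ofReal_ne_top
    finiteness
  intro f hf
  set G := dyMax (volume.withDensity S) (fun z => f z / S z) with hG
  have hGm : Measurable G := measurable_dyMax _ _ (by fun_prop)
  set g : Eu n → ℝ≥0∞ := fun y => G y ^ (p - 1) / W y with hg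
  have hgm : Measurable g := by fun_prop
  have hMg : Measurable (dyMax (volume.withDensity W) g) := measurable_dyMax _ _ hgm
  set D := C * ENNReal.ofReal (4 ^ n) ^ p with hD
  have hpq : (p - 1) * q = p := by rw [hq]; field_simp
  have s1 : ∀ x, dyMax volume f x ^ p ≤ D ^ q * dyMax (volume.withDensity W) g x ^ q := by
    intro x
    have := ENNReal.rpow_le_rpow (h.pointwise f hf x) hq0.le
    rwa [← ENNReal.rpow_mul, hpq, ENNReal.mul_rpow_of_nonneg _ _ hq0.le] at this
  have s2 := H₁ (volume.withDensity W) g hgm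
  have s3 := H₂ (volume.withDensity S) (fun z => f z / S z) (by fun_prop)
  rw [← hG] at s3
  rw [lintegral_withDensity_eq_lintegral_mul _ hW (by fun_prop),
    lintegral_withDensity_eq_lintegral_mul _ hW (by fun_prop)] at s2
  rw [lintegral_withDensity_eq_lintegral_mul _ hS (by fun_prop),
    lintegral_withDensity_eq_lintegral_mul _ hS (by fun_prop)] at s3
  have e2 : ∫⁻ x, (W * fun x => g x ^ q) x = ∫⁻ x, (S * fun x => G x ^ p) x := by
    refine lintegral_congr_ae ?_
    filter_upwards [h.ae] with x hx
    simp only [Pi.mul_apply, hg]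
    rw [ENNReal.div_rpow_of_nonneg _ _ hq0.le, ← ENNReal.rpow_mul, hpq, hx.2.2, div_eq_mul_inv,
      ← ENNReal.rpow_neg, mul_left_comm, mul_comm]
    congr 1
    conv_lhs => rw [← ENNReal.rpow_one (W x), ← ENNReal.rpow_mul, ← ENNReal.rpow_add _ _ hx.1 hx.2.1]
    congr 1
    rw [hq]; field_simp; ring
  have e3 : ∫⁻ x, (S * fun x => (f x / S x) ^ p) x = ∫⁻ x, f x ^ p * W x := by
    refine lintegral_congr_ae ?_
    filter_upwards [h.ae] with x hx
    simp only [Pi.mul_apply]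
    rw [ENNReal.div_rpow_of_nonneg _ _ hp0.le, hx.2.2, div_eq_mul_inv (f x ^ p),
      ← ENNReal.rpow_neg, mul_left_comm]
    congr 1
    rw [← ENNReal.rpow_mul, ← ENNReal.rpow_add _ _ hx.1 hx.2.1]
    conv_rhs => rw [← ENNReal.rpow_one (W x)]
    congr 1
    field_simp; ring
  rw [e2] at s2
  rw [e3] at s3
  calc ∫⁻ x, dyMax volume f x ^ p * W x
      ≤ ∫⁻ x, D ^ q * (W * fun x => dyMax (volume.withDensity W) g x ^ q) x := by
        refine lintegral_mono fun x => ?_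
        calc _ ≤ _ := mul_le_mul' (s1 x) le_rfl
          _ = _ := by simp only [Pi.mul_apply]; ring
    _ = D ^ q * ∫⁻ x, (W * fun x => dyMax (volume.withDensity W) g x ^ q) x :=
        lintegral_const_mul _ (by fun_prop)
    _ ≤ D ^ q * (K₁ * (K₂ * ∫⁻ x, f x ^ p * W x)) :=
        mul_le_mul' le_rfl (s2.trans (mul_le_mul' le_rfl s3))
    _ = _ := by ring

end

lemma apData_of {n : ℕ} (p : ℝ) (hp : 1 < p) (w : Eu n → ℝ) (hw : IsWeight w) (hAp : MuckAp p w) :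
    ∃ C : ℝ≥0∞, ApData p (fun x => ENNReal.ofReal (w x))
      (fun x => ENNReal.ofReal (w x ^ (-(1 / (p - 1))))) C := by
  obtain ⟨C, hC, hA⟩ := hAp
  obtain ⟨hm, h0, hloc, hpos⟩ := hw
  have hp0 : 0 < p := by linarith
  have hp1 : 0 < p - 1 := by linarith
  have hnz : ∀ (T : Eu n → ℝ≥0∞), Measurable T → (∀ᵐ x, T x ≠ 0) → ∀ a r, 0 < r →
      ∫⁻ x in ball a r, T x ≠ 0 := by
    intro T hT hae a r hr h
    rw [lintegral_eq_zero_iff hT] at h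
    have : ∀ᵐ x ∂(volume.restrict (ball a r)), False := by
      filter_upwards [h, ae_restrict_of_ae hae] with x h1 h2
      exact h2 h1
    rw [Filter.eventually_false_iff_eq_bot, ae_eq_bot, Measure.restrict_eq_zero] at this
    exact vol_ne_zero a r hr this
  have hW0 := hnz (fun x => ENNReal.ofReal (w x)) (by fun_prop) (by
    filter_upwards [hpos] with x hx
    simpa using hx)
  have hS0 := hnz (fun x => ENNReal.ofReal (w x ^ (-(1 / (p - 1))))) (by fun_prop) (by
    filter_upwards [hpos] with x hx
    have := Real.rpow_pos_of_pos hx (-(1 / (p - 1)))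
    rw [ne_eq, ENNReal.ofReal_eq_zero, not_le]
    exact this)
  have hWT : ∀ a r, 0 < r → ∫⁻ x in ball a r, ENNReal.ofReal (w x) ≠ ⊤ := by
    intro a r hr
    have : IntegrableOn w (ball a r) :=
      (hloc.integrableOn_isCompact (isCompact_closedBall a r)).mono_set ball_subset_closedBall
    exact this.lintegral_lt_top.ne
  have hAp' : ∀ a r, 0 < r → (∫⁻ x in ball a r, ENNReal.ofReal (w x)) *
      (∫⁻ x in ball a r, ENNReal.ofReal (w x ^ (-(1 / (p - 1))))) ^ (p - 1) ≤
    ENNReal.ofReal C * volume (ball a r) ^ p := by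
    intro a r hr
    have H := hA a r hr
    set v := volume (ball a r) with hv
    have hv0 : v ≠ 0 := vol_ne_zero a r hr
    have hvT : v ≠ ⊤ := vol_ne_top a r
    have hvp : v ^ p = v * v ^ (p - 1) := by
      conv_lhs => rw [show p = 1 + (p - 1) by ring,
        ENNReal.rpow_add_of_nonneg _ _ (by norm_num) hp1.le, ENNReal.rpow_one]
    set m := ∫⁻ x in ball a r, ENNReal.ofReal (w x)
    set V := ∫⁻ x in ball a r, ENNReal.ofReal (w x ^ (-(1 / (p - 1))))
    calc m * V ^ (p - 1) = ((v * v⁻¹) * m) * ((v * v⁻¹) * V) ^ (p - 1) := by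
          rw [ENNReal.mul_inv_cancel hv0 hvT, one_mul, one_mul]
      _ = (v⁻¹ * m) * (v⁻¹ * V) ^ (p - 1) * v ^ p := by
          rw [hvp, mul_assoc v v⁻¹ V, ENNReal.mul_rpow_of_nonneg v _ hp1.le]
          ring
      _ ≤ _ := mul_le_mul' H le_rfl
  refine ⟨ENNReal.ofReal C, hp, by fun_prop, by fun_prop, ?_, ENNReal.ofReal_ne_top, hAp',
    hW0, hWT, hS0, ?_⟩
  · filter_upwards [hpos] with x hx
    refine ⟨by simpa using hx, ENNReal.ofReal_ne_top, ?_⟩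
    rw [ENNReal.ofReal_rpow_of_pos hx]
  · intro a r hr hT
    have H := hAp' a r hr
    rw [hT, ENNReal.top_rpow_of_pos hp1, ENNReal.mul_top (hW0 a r hr), top_le_iff] at H
    exact ENNReal.mul_ne_top ENNReal.ofReal_ne_top
      (ENNReal.rpow_ne_top_of_nonneg hp0.le (vol_ne_top a r)) H

lemma avg_le_dyMax {n : ℕ} (F : Eu n → ℝ≥0∞) (x : Eu n) (s : ℝ) (hs : 0 < s) :
    (volume (ball x s))⁻¹ * ∫⁻ y in ball x s, F y ≤ ENNReal.ofReal (2 ^ n) * dyMax volume F x := by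
  obtain ⟨k, hk1, hk2⟩ := exists_mem_Ioc_zpow hs (one_lt_two (α := ℝ))
  have hk : (ball x ((2:ℝ) ^ (k+1))) ⊆ ball x (2 * s) := by
    refine ball_subset_ball ?_
    rw [zpow_add_one₀ (by norm_num)]; linarith
  have hpos : (0:ℝ) < 2 ^ (k+1) := by positivity
  set u := volume (ball x ((2:ℝ) ^ (k+1))) with hu
  have hu0 : u ≠ 0 := vol_ne_zero _ _ hpos
  have huT : u ≠ ⊤ := vol_ne_top _ _
  have h1 : u ≤ ENNReal.ofReal (2 ^ n) * volume (ball x s) := by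
    rw [← vol_scale x x 2 s (by norm_num)]
    exact measure_mono hk
  have h2 : (volume (ball x s))⁻¹ ≤ ENNReal.ofReal (2 ^ n) * u⁻¹ := by
    have hv0 := vol_ne_zero x s hs
    have hvT := vol_ne_top x s
    rw [ENNReal.inv_le_iff_le_mul (fun _ => hv0) (fun h => absurd h hvT), ← mul_assoc,
      ← div_eq_mul_inv, ENNReal.le_div_iff_mul_le (Or.inl hu0) (Or.inl huT), one_mul, mul_comm]
    exact h1
  calc _ ≤ (ENNReal.ofReal (2 ^ n) * u⁻¹) * ∫⁻ y in ball x ((2:ℝ) ^ (k+1)), F y :=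
        mul_le_mul' h2 (lintegral_mono_set (ball_subset_ball hk2))
    _ = ENNReal.ofReal (2 ^ n) * ((∫⁻ y in ball x ((2:ℝ) ^ (k+1)), F y) / u) := by
        rw [div_eq_mul_inv]; ring
    _ ≤ _ := mul_le_mul' le_rfl (le_iSup (fun k : ℤ =>
        (∫⁻ y in ball x ((2:ℝ) ^ k), F y) / volume (ball x ((2:ℝ) ^ k))) (k+1))

lemma ApData.local_bound {n : ℕ} {p : ℝ} {W S : Eu n → ℝ≥0∞} {C : ℝ≥0∞} (h : ApData p W S C) :
    ∃ L : ℝ≥0∞, L ≠ ⊤ ∧ ∀ (f : Eu n → ℝ), Measurable f → ∀ (a : Eu n) (r : ℝ), 0 < r →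
      ∀ T : ℝ≥0∞, (∀ t, r < t → ∫⁻ x in ball a t, ENNReal.ofReal |f x| ^ p * W x ≤
        T ^ p * ∫⁻ x in ball a t, W x) →
      ∫⁻ x in ball a r, HLMax f x ^ p * W x ≤ L * (T ^ p * ∫⁻ x in ball a r, W x) := by
  have hp0 : 0 < p := by linarith [h.hp]
  have hC := h.hC
  have hW := h.hW
  obtain ⟨K, hK, H⟩ := h.muckenhoupt
  set c := ENNReal.ofReal (2 ^ n) ^ p with hc
  have hcT : c ≠ ⊤ := ENNReal.rpow_ne_top_of_nonneg hp0.le ENNReal.ofReal_ne_top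
  refine ⟨c * (K * (C * c) + C), by finiteness, ?_⟩
  intro f hf a r hr T hT
  set F : Eu n → ℝ≥0∞ := fun x => ENNReal.ofReal |f x| with hF
  have hFm : Measurable F := by fun_prop
  set F₁ := (ball a (2 * r)).indicator F with hF₁
  have hF₁m : Measurable F₁ := hFm.indicator measurableSet_ball
  have hMm := measurable_dyMax volume F₁ hF₁m
  have hpt : ∀ x ∈ ball a r, HLMax f x ^ p ≤ c * (dyMax volume F₁ x ^ p + C * T ^ p) := by
    intro x hx
    have hx' : dist x a < r := hx
    rw [← ENNReal.le_rpow_inv_iff hp0]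
    refine iSup_le fun s => ?_
    obtain ⟨s, hs⟩ := s
    have hs0 : 0 < s := hs
    rw [ENNReal.le_rpow_inv_iff hp0]
    rcases le_or_gt s r with hsr | hsr
    · have hsub : ball x s ⊆ ball a (2 * r) := by
        intro z hz
        rw [mem_ball] at hz ⊢
        have := dist_triangle z x a
        linarith
      have e : ∫⁻ y in ball x s, ENNReal.ofReal |f y| = ∫⁻ y in ball x s, F₁ y := by
        refine setLIntegral_congr_fun measurableSet_ball fun y hy => ?_
        rw [hF₁, indicator_of_mem (hsub hy)]
      show ((volume (ball x s))⁻¹ * ∫⁻ y in ball x s, ENNReal.ofReal |f y|) ^ p ≤ _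
      rw [e]
      calc _ ≤ _ := ENNReal.rpow_le_rpow (avg_le_dyMax F₁ x s hs0) hp0.le
        _ = c * dyMax volume F₁ x ^ p := ENNReal.mul_rpow_of_nonneg _ _ hp0.le
        _ ≤ _ := mul_le_mul' le_rfl le_self_add
    · have hsub : ball x s ⊆ ball a (2 * s) := by
        intro z hz
        rw [mem_ball] at hz ⊢
        have := dist_triangle z x a
        linarith
      have h2s : 0 < 2 * s := by linarith
      have h1 := h.avg F hFm a (2 * s) h2s
      have h2 := hT (2 * s) (by linarith)
      set m := ∫⁻ x in ball a (2 * s), W x with hm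
      have hm0 : m ≠ 0 := h.W0 _ _ h2s
      have hmT : m ≠ ⊤ := h.WT _ _ h2s
      set v := volume (ball x s) with hv
      have hv0 : v ≠ 0 := vol_ne_zero x s hs0
      have hvT : v ≠ ⊤ := vol_ne_top x s
      have h3 : (∫⁻ y in ball a (2 * s), F y) ^ p ≤ C * (c * v ^ p) * T ^ p := by
        refine (ENNReal.mul_le_mul_iff_right hm0 hmT).1 (h1.trans ?_)
        rw [vol_scale a x 2 s (by norm_num), ENNReal.mul_rpow_of_nonneg _ _ hp0.le]
        calc _ ≤ C * (c * v ^ p) * (T ^ p * m) := mul_le_mul' le_rfl h2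
          _ = _ := by ring
      calc (v⁻¹ * ∫⁻ y in ball x s, F y) ^ p ≤ (v⁻¹ * ∫⁻ y in ball a (2 * s), F y) ^ p :=
            ENNReal.rpow_le_rpow (mul_le_mul' le_rfl (lintegral_mono_set hsub)) hp0.le
        _ = (v⁻¹) ^ p * (∫⁻ y in ball a (2 * s), F y) ^ p := ENNReal.mul_rpow_of_nonneg _ _ hp0.le
        _ ≤ (v⁻¹) ^ p * (C * (c * v ^ p) * T ^ p) := mul_le_mul' le_rfl h3
        _ = ((v⁻¹) ^ p * v ^ p) * (c * (C * T ^ p)) := by ring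
        _ = c * (C * T ^ p) := by
            rw [← ENNReal.mul_rpow_of_nonneg _ _ hp0.le, ENNReal.inv_mul_cancel hv0 hvT,
              ENNReal.one_rpow, one_mul]
        _ ≤ _ := mul_le_mul' le_rfl le_add_self
  set m := ∫⁻ x in ball a r, W x with hm
  have hF1 : ∫⁻ x, F₁ x ^ p * W x = ∫⁻ x in ball a (2 * r), F x ^ p * W x := by
    rw [← lintegral_indicator measurableSet_ball]
    refine lintegral_congr fun x => ?_
    by_cases hx : x ∈ ball a (2 * r)
    · rw [hF₁, indicator_of_mem hx, indicator_of_mem hx]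
    · rw [hF₁, indicator_of_notMem hx, indicator_of_notMem hx]; simp [hp0]
  have hD := h.doubling a r hr
  have hB := hT (2 * r) (by linarith)
  calc ∫⁻ x in ball a r, HLMax f x ^ p * W x
      ≤ ∫⁻ x in ball a r, c * (dyMax volume F₁ x ^ p * W x + C * T ^ p * W x) := by
        refine setLIntegral_mono' measurableSet_ball fun x hx => ?_
        calc _ ≤ _ := mul_le_mul' (hpt x hx) le_rfl
          _ = _ := by ring
    _ = c * ((∫⁻ x in ball a r, dyMax volume F₁ x ^ p * W x) + C * T ^ p * m) := by
        rw [lintegral_const_mul' _ _ hcT, lintegral_add_left (by fun_prop),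
          lintegral_const_mul _ hW]
    _ ≤ c * (K * (T ^ p * (C * c * m)) + C * T ^ p * m) := by
        refine mul_le_mul' le_rfl (add_le_add ?_ le_rfl)
        calc _ ≤ ∫⁻ x, dyMax volume F₁ x ^ p * W x := setLIntegral_le_lintegral _ _
          _ ≤ K * ∫⁻ x, F₁ x ^ p * W x := H F₁ hF₁m
          _ ≤ _ := by
            rw [hF1]
            exact mul_le_mul' le_rfl (hB.trans (mul_le_mul' le_rfl hD))
    _ = _ := by ring

/-- Let `1 < p < ∞`, `w ∈ A_p`, and let `ψ₁, ψ₂` be positive functions on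
`ℝⁿ × (0,∞)` with `sup_{r<t<∞} ψ₁(a,t) ≤ C·ψ₂(a,r)` for all `(a,r)`. Then the
Hardy–Littlewood maximal operator is bounded from `M^{p,w}_{ψ₁}` to `M^{p,w}_{ψ₂}`. -/
theorem statement6 {n : ℕ} (p : ℝ) (hp : 1 < p)
    (w : EuclideanSpace ℝ (Fin n) → ℝ) (hw : IsWeight w) (hAp : MuckAp p w)
    (ψ₁ ψ₂ : EuclideanSpace ℝ (Fin n) → ℝ → ℝ)
    (hψ₁ : ∀ a r, 0 < r → 0 < ψ₁ a r) (hψ₂ : ∀ a r, 0 < r → 0 < ψ₂ a r)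
    (C : ℝ) (hC : 0 < C)
    (hcond : ∀ (a : EuclideanSpace ℝ (Fin n)) (r : ℝ), 0 < r →
      ∀ t, r < t → ψ₁ a t ≤ C * ψ₂ a r) :
    ∃ C' : ℝ, 0 < C' ∧ ∀ f : EuclideanSpace ℝ (Fin n) → ℝ,
      MemLocWLp p w f → morreyNorm p w ψ₁ f < ⊤ →
      morreyNormE p w ψ₂ (HLMax f) ≤ ENNReal.ofReal C' * morreyNorm p w ψ₁ f := by

  have hp0 : 0 < p := by linarith
  obtain ⟨A, hA⟩ := apData_of p hp w hw hAp
  obtain ⟨L, hL, H⟩ := hA.local_bound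
  have hLT : L ^ (1 / p) * ENNReal.ofReal C ≠ ⊤ :=
    ENNReal.mul_ne_top (ENNReal.rpow_ne_top_of_nonneg (by positivity) hL) ENNReal.ofReal_ne_top
  refine ⟨(L ^ (1 / p) * ENNReal.ofReal C).toReal + 1, by positivity, ?_⟩
  intro f hf _
  refine iSup_le fun a => iSup_le fun r => ?_
  obtain ⟨r, hr⟩ := r
  have hr0 : 0 < r := hr
  simp only
  set N := morreyNorm p w ψ₁ f with hN
  set m := wSet w (ball a r) with hm
  have hm0 : m ≠ 0 := hA.W0 a r hr0
  have hmT : m ≠ ⊤ := hA.WT a r hr0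
  set ψ := ENNReal.ofReal (ψ₂ a r) with hψ
  have hψ0 : ψ ≠ 0 := by simpa [hψ] using hψ₂ a r hr0
  have hψT : ψ ≠ ⊤ := ENNReal.ofReal_ne_top
  set T := N * (ENNReal.ofReal C * ψ) with hT
  have key := H f hf.1 a r hr0 T (by
    intro t ht
    have ht0 : 0 < t := hr0.trans ht
    have h1 : (ENNReal.ofReal (ψ₁ a t))⁻¹ * wSet w (ball a t) ^ (-(1 / p)) * wLp p w f (ball a t) ≤ N :=
      le_iSup₂_of_le (f := fun (a : EuclideanSpace ℝ (Fin n)) (r : Set.Ioi (0 : ℝ)) =>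
        (ENNReal.ofReal (ψ₁ a r.1))⁻¹ * wSet w (ball a r.1) ^ (-(1 / p)) * wLp p w f (ball a r.1))
        a ⟨t, ht0⟩ le_rfl
    set M := wSet w (ball a t) with hM
    have hM0 : M ≠ 0 := hA.W0 a t ht0
    have hMT : M ≠ ⊤ := hA.WT a t ht0
    have hq0 : ENNReal.ofReal (ψ₁ a t) ≠ 0 := by simpa using hψ₁ a t ht0
    have hq1 : ENNReal.ofReal (ψ₁ a t) ≤ ENNReal.ofReal C * ψ := by
      rw [hψ, ← ENNReal.ofReal_mul hC.le]
      exact ENNReal.ofReal_le_ofReal (hcond a r hr0 t ht)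
    have hMp : M ^ (-(1 / p)) * M ^ (1 / p) = 1 := by
      rw [← ENNReal.rpow_add _ _ hM0 hMT]; simp
    have h2 : wLp p w f (ball a t) ≤ T * M ^ (1 / p) := by
      calc wLp p w f (ball a t) = (ENNReal.ofReal (ψ₁ a t) * (ENNReal.ofReal (ψ₁ a t))⁻¹) *
            (M ^ (-(1 / p)) * M ^ (1 / p)) * wLp p w f (ball a t) := by
            rw [hMp, ENNReal.mul_inv_cancel hq0 ENNReal.ofReal_ne_top]; simp
        _ = ((ENNReal.ofReal (ψ₁ a t))⁻¹ * M ^ (-(1 / p)) * wLp p w f (ball a t)) *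
            ENNReal.ofReal (ψ₁ a t) * M ^ (1 / p) := by ring
        _ ≤ N * (ENNReal.ofReal C * ψ) * M ^ (1 / p) :=
            mul_le_mul' (mul_le_mul' h1 hq1) le_rfl
    have h3 := ENNReal.rpow_le_rpow h2 hp0.le
    rw [ENNReal.mul_rpow_of_nonneg _ _ hp0.le, wLp, ← ENNReal.rpow_mul, ← ENNReal.rpow_mul,
      one_div_mul_cancel hp0.ne', ENNReal.rpow_one, ENNReal.rpow_one] at h3
    exact h3)
  have h4 : wLpE p w (HLMax f) (ball a r) ≤ L ^ (1 / p) * (T * m ^ (1 / p)) := by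
    have h5 := ENNReal.rpow_le_rpow key (z := 1 / p) (by positivity)
    rw [ENNReal.mul_rpow_of_nonneg _ _ (by positivity), ENNReal.mul_rpow_of_nonneg _ _ (by positivity),
      ← ENNReal.rpow_mul, mul_one_div_cancel hp0.ne', ENNReal.rpow_one] at h5
    exact h5
  have hmp : m ^ (-(1 / p)) * m ^ (1 / p) = 1 := by
    rw [← ENNReal.rpow_add _ _ hm0 hmT]; simp
  calc ψ⁻¹ * m ^ (-(1 / p)) * wLpE p w (HLMax f) (ball a r)
      ≤ ψ⁻¹ * m ^ (-(1 / p)) * (L ^ (1 / p) * (T * m ^ (1 / p))) := mul_le_mul' le_rfl h4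
    _ = (ψ⁻¹ * ψ) * (m ^ (-(1 / p)) * m ^ (1 / p)) * (L ^ (1 / p) * ENNReal.ofReal C * N) := by
        rw [hT]; ring
    _ = L ^ (1 / p) * ENNReal.ofReal C * N := by
        rw [hmp, ENNReal.inv_mul_cancel hψ0 hψT, one_mul, one_mul]
    _ ≤ _ := by
        refine mul_le_mul' ?_ le_rfl
        calc _ = ENNReal.ofReal (L ^ (1 / p) * ENNReal.ofReal C).toReal := (ENNReal.ofReal_toReal hLT).symm
          _ ≤ _ := ENNReal.ofReal_le_ofReal (by linarith)
end
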